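/- For every ε with 0 < ε < 1/3 there exists k₀ such that for every integer k ≥ k₀, setting n = ⌊(1/3 − ε)·k²/log k⌋, there exists a simple graph G on n vertices which is triangle-free (contains no clique of size 3) and has no independent set of size k (equivalently, the complement of G contains no clique of size k). Consequently the off-diagonal Ramsey number satisfies R(3,k) > (1/3 − ε)·k²/log k for all sufficiently large k. -/

import Mathlib

/-!
The graph is the *two-bite* construction. Take two sparse random base graphs on `m` vertices, with
`m` much smaller than `n`, and pull each of them back along a map from the `n` vertices. Keep an
edge of the union only if its ends have no common neighbour in either base graph; by the pigeonhole
principle on the two colours, no triangle survives.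

Let `I` be an independent set of size `k`. Then every edge of a base graph inside a projection of
`I` joins a pair closed by some base vertex. First expose the edges leaving the projections: the
*open* pairs, closed by no outside vertex, are numerous, up to an error controlled by an exponential
moment. The edges inside the projections are still random, so the probability that hardly any open
pair is an edge is `exp (-p * #open)` up to lower order terms. The open edges closed from inside are
indeed few: once the fibres of the base vertices of high degree are removed from `I`, this is
another moment bound. If the projections of `I` have `ρ₁ * k` and `ρ₂ * k` elements, averaging over
random maps gains a further factor `k ^ (-(1 - ρ₁) * k - (1 - ρ₂) * k)`. With `p = 1.2 * log k / k`
the two gains together beat the number of choices of `I`, which is about `k ^ k`, for all values of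
`ρ₁` and `ρ₂`.
-/

namespace TwoBite

open Finset

section RandomSubset

variable {α β ι : Type*} [DecidableEq α] [DecidableEq β]

/-- The expectation of `f S`, where `S` is a random subset of `E` that contains every element
independently with probability `p`. All ground sets are finite, so that expectations are finite
sums and no measurability enters. -/
def subsetExp (p : ℝ) (E : Finset α) (f : Finset α → ℝ) : ℝ :=
  ∑ S ∈ E.powerset, p ^ #S * (1 - p) ^ #(E \ S) * f S

/-- The probability that the random subset of `E` from `subsetExp` satisfies `P`. -/
noncomputable def subsetProb (p : ℝ) (E : Finset α) (P : Finset α → Prop) : ℝ :=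
  open Classical in subsetExp p E fun S => if P S then 1 else 0

variable {p : ℝ} {E E₁ E₂ S T : Finset α}

theorem union_inter_eq_left_of_subset_of_disjoint (hS : S ⊆ E) (hT : Disjoint T E) :
    (S ∪ T) ∩ E = S := by
  rw [union_inter_distrib_right, inter_eq_left.2 hS, disjoint_iff_inter_eq_empty.1 hT, union_empty]

theorem subsetExp_prod (p : ℝ) (E : Finset α) (g : α → ℝ) :
    subsetExp p E (fun S => ∏ e ∈ S, g e) = ∏ e ∈ E, (p * g e + (1 - p)) := by
  rw [prod_add, subsetExp]
  refine sum_congr rfl fun S _ => ?_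
  rw [prod_mul_distrib, prod_const, prod_const]
  ring

theorem subsetExp_mul_left (c : ℝ) (f : Finset α → ℝ) :
    subsetExp p E (fun S => c * f S) = c * subsetExp p E f := by
  simp only [subsetExp, mul_sum, mul_left_comm]

@[simp]
theorem subsetExp_const (p : ℝ) (E : Finset α) (c : ℝ) : subsetExp p E (fun _ => c) = c := by
  have h_one : subsetExp p E (fun _ => 1) = 1 := by simpa using subsetExp_prod p E fun _ => 1
  simpa [h_one] using subsetExp_mul_left (p := p) (E := E) c fun _ => 1

theorem subsetExp_congr {f g : Finset α → ℝ} (h : ∀ S ⊆ E, f S = g S) :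
    subsetExp p E f = subsetExp p E g :=
  sum_congr rfl fun S hS => by rw [h S (mem_powerset.1 hS)]

theorem subsetExp_mono (hp : p ∈ Set.Icc 0 1) {f g : Finset α → ℝ} (h : ∀ S ⊆ E, f S ≤ g S) :
    subsetExp p E f ≤ subsetExp p E g := by
  refine sum_le_sum fun S hS => ?_
  have := hp.1
  have := sub_nonneg.2 hp.2
  exact mul_le_mul_of_nonneg_left (h S (mem_powerset.1 hS)) (by positivity)

theorem subsetExp_le_of_forall_le (hp : p ∈ Set.Icc 0 1) {f : Finset α → ℝ} {c : ℝ}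
    (h : ∀ S ⊆ E, f S ≤ c) : subsetExp p E f ≤ c :=
  (subsetExp_mono hp h).trans_eq (subsetExp_const p E c)

theorem subsetExp_nonneg (hp : p ∈ Set.Icc 0 1) {f : Finset α → ℝ} (h : ∀ S ⊆ E, 0 ≤ f S) :
    0 ≤ subsetExp p E f := by
  simpa using subsetExp_mono hp h

theorem subsetExp_add (f g : Finset α → ℝ) :
    subsetExp p E (fun S => f S + g S) = subsetExp p E f + subsetExp p E g := by
  simp only [subsetExp, mul_add, sum_add_distrib]

theorem subsetExp_sum (s : Finset ι) (f : ι → Finset α → ℝ) :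
    subsetExp p E (fun S => ∑ i ∈ s, f i S) = ∑ i ∈ s, subsetExp p E (f i) := by
  simp only [subsetExp, mul_sum]
  exact sum_comm

@[simp]
theorem subsetExp_empty (f : Finset α → ℝ) : subsetExp p ∅ f = f ∅ := by
  simp [subsetExp]

theorem subsetExp_insert {a : α} (ha : a ∉ E) (f : Finset α → ℝ) :
    subsetExp p (insert a E) f =
      (1 - p) * subsetExp p E f + p * subsetExp p E (fun S => f (insert a S)) := by
  simp only [subsetExp]
  rw [sum_powerset_insert ha, mul_sum, mul_sum]
  congr 1 <;> refine sum_congr rfl fun S hS => ?_ <;>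
    have haS : a ∉ S := fun h => ha (mem_powerset.1 hS h)
  · rw [insert_sdiff_of_notMem _ haS, card_insert_of_notMem fun h => ha (mem_sdiff.1 h).1]
    ring
  · rw [card_insert_of_notMem haS, insert_sdiff_insert, sdiff_insert_of_notMem ha]
    ring

theorem subsetExp_union (h : Disjoint E₁ E₂) (f : Finset α → ℝ) :
    subsetExp p (E₁ ∪ E₂) f = subsetExp p E₁ fun S => subsetExp p E₂ fun T => f (S ∪ T) := by
  induction E₁ using Finset.induction_on generalizing f with
  | empty => simp
  | insert a E ha ih =>
    rw [disjoint_insert_left] at h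
    have ha' : a ∉ E ∪ E₂ := by simp [ha, h.1]
    rw [insert_union, subsetExp_insert ha', subsetExp_insert ha, ih h.2, ih h.2]
    simp only [insert_union]

theorem subsetExp_image {g : β → α} (A : Finset β) (hg : Set.InjOn g A) (f : Finset α → ℝ) :
    subsetExp p (A.image g) f = subsetExp p A fun S => f (S.image g) := by
  induction A using Finset.induction_on generalizing f with
  | empty => simp
  | insert a A ha ih =>
    rw [coe_insert] at hg
    have hA : Set.InjOn g A := hg.mono (Set.subset_insert _ _)
    have ha' : g a ∉ A.image g := by simpa using ((Set.injOn_insert (by simpa using ha)).1 hg).2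
    rw [image_insert, subsetExp_insert ha', subsetExp_insert ha, ih hA, ih hA]
    simp only [image_insert]

theorem subsetExp_inter_of_subset (h : E₁ ⊆ E) (f : Finset α → ℝ) :
    subsetExp p E (fun S => f (S ∩ E₁)) = subsetExp p E₁ f := by
  rw [← union_sdiff_of_subset h, subsetExp_union disjoint_sdiff]
  refine subsetExp_congr fun S hS => ?_
  rw [← subsetExp_const p (E \ E₁) (f S)]
  refine subsetExp_congr fun T hT => ?_
  rw [union_inter_eq_left_of_subset_of_disjoint hS (sdiff_disjoint.mono_left hT)]

theorem subsetExp_biUnion_prod (s : Finset ι) (E : ι → Finset α)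
    (hE : (s : Set ι).PairwiseDisjoint E) (g : ι → Finset α → ℝ) :
    subsetExp p (s.biUnion E) (fun S => ∏ i ∈ s, g i (S ∩ E i)) =
      ∏ i ∈ s, subsetExp p (E i) (g i) := by
  classical
  induction s using Finset.induction_on with
  | empty => simp
  | insert a s ha ih =>
    have hdisj : ∀ i ∈ s, Disjoint (E a) (E i) := fun i hi =>
      hE (by simp) (by simp [hi]) fun h => ha (h ▸ hi)
    have hdisj' : Disjoint (E a) (s.biUnion E) := (disjoint_biUnion_right _ _ _).2 hdisj
    have hsplit : ∀ S ⊆ E a, ∀ T ⊆ s.biUnion E,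
        ∏ i ∈ insert a s, g i ((S ∪ T) ∩ E i) = g a S * ∏ i ∈ s, g i (T ∩ E i) := by
      intro S hS T hT
      rw [prod_insert ha, union_inter_eq_left_of_subset_of_disjoint hS (hdisj'.symm.mono_left hT)]
      congr 1
      refine prod_congr rfl fun i hi => ?_
      rw [union_inter_distrib_right,
        disjoint_iff_inter_eq_empty.1 ((hdisj i hi).mono_left hS), empty_union]
    rw [biUnion_insert, subsetExp_union hdisj', prod_insert ha,
      ← ih (hE.subset (by simp)), mul_comm, ← subsetExp_mul_left]
    refine subsetExp_congr fun S hS => ?_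
    rw [subsetExp_congr (hsplit S hS), subsetExp_mul_left, mul_comm]

theorem subsetExp_pow_card_inter (p : ℝ) (E C : Finset α) (t : ℝ) :
    subsetExp p E (fun S => t ^ #(S ∩ C)) = (p * t + (1 - p)) ^ #(E ∩ C) := by
  have hprod : ∀ S : Finset α, ∏ e ∈ S, (if e ∈ C then t else 1) = t ^ #(S ∩ C) := fun S => by
    rw [prod_ite, prod_const_one, mul_one, prod_const, filter_mem_eq_inter]
  have hfactor : ∀ e, p * (if e ∈ C then t else 1) + (1 - p) =
      if e ∈ C then p * t + (1 - p) else 1 := fun e => by split_ifs <;> ring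
  simp only [← hprod, subsetExp_prod, hfactor]
  rw [prod_ite, prod_const_one, mul_one, prod_const, filter_mem_eq_inter]

theorem mul_add_one_sub_pow_le_exp (hp : p ∈ Set.Icc 0 1) {t : ℝ} (ht : 0 ≤ t) (n : ℕ) :
    (p * t + (1 - p)) ^ n ≤ Real.exp (p * (t - 1) * n) := by
  have h_nonneg : 0 ≤ p * t + (1 - p) := add_nonneg (mul_nonneg hp.1 ht) (sub_nonneg.2 hp.2)
  calc (p * t + (1 - p)) ^ n ≤ Real.exp (p * (t - 1)) ^ n := by
        refine pow_le_pow_left₀ h_nonneg ?_ n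
        linarith [Real.add_one_le_exp (p * (t - 1))]
    _ = Real.exp (p * (t - 1) * n) := by rw [← Real.exp_nat_mul, mul_comm]

theorem subsetProb_le_subsetExp (hp : p ∈ Set.Icc 0 1) {P : Finset α → Prop} {g : Finset α → ℝ}
    (hg : ∀ S ⊆ E, 0 ≤ g S) (h : ∀ S ⊆ E, P S → 1 ≤ g S) :
    subsetProb p E P ≤ subsetExp p E g := by
  classical
  refine subsetExp_mono hp fun S hS => ?_
  split_ifs with hP
  exacts [h S hS hP, hg S hS]

theorem subsetProb_mono (hp : p ∈ Set.Icc 0 1) {P Q : Finset α → Prop}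
    (h : ∀ S ⊆ E, P S → Q S) : subsetProb p E P ≤ subsetProb p E Q := by
  classical
  refine subsetProb_le_subsetExp hp (fun S _ => by positivity) fun S hS hP => ?_
  rw [if_pos (h S hS hP)]

theorem subsetProb_congr {P Q : Finset α → Prop} (h : ∀ S ⊆ E, (P S ↔ Q S)) :
    subsetProb p E P = subsetProb p E Q := by
  classical
  exact subsetExp_congr fun S hS => by rw [if_congr (h S hS) rfl rfl]

theorem subsetProb_eq_zero {P : Finset α → Prop} (h : ∀ S ⊆ E, ¬P S) : subsetProb p E P = 0 := by
  classical
  exact (subsetExp_congr fun S hS => if_neg (h S hS)).trans (subsetExp_const p E 0)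

theorem exists_not_of_subsetProb_lt_one {P : Finset α → Prop} (h : subsetProb p E P < 1) :
    ∃ S ⊆ E, ¬P S := by
  classical
  by_contra! hc
  exact h.ne ((subsetExp_congr fun S hS => if_pos (hc S hS)).trans (subsetExp_const p E 1))

theorem subsetProb_exists (hp : p ∈ Set.Icc 0 1) (s : Finset ι) (P : ι → Finset α → Prop) :
    subsetProb p E (fun S => ∃ i ∈ s, P i S) ≤ ∑ i ∈ s, subsetProb p E (P i) := by
  classical
  simp only [subsetProb, ← subsetExp_sum]
  refine subsetProb_le_subsetExp hp (fun S _ => sum_nonneg fun i _ => by positivity) ?_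
  rintro S - ⟨i, hi, hP⟩
  have := single_le_sum (f := fun i => if P i S then (1 : ℝ) else 0) (fun j _ => by positivity) hi
  simpa [hP] using this

theorem subsetProb_exists_le (hp : p ∈ Set.Icc 0 1) (s : Finset ι) (P : ι → Finset α → Prop)
    {b : ℝ} (h : ∀ i ∈ s, subsetProb p E (P i) ≤ b) :
    subsetProb p E (fun S => ∃ i ∈ s, P i S) ≤ #s * b := by
  simpa using (subsetProb_exists hp s P).trans (sum_le_card_nsmul s _ b h)

theorem subsetProb_or (hp : p ∈ Set.Icc 0 1) (P Q : Finset α → Prop) :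
    subsetProb p E (fun S => P S ∨ Q S) ≤ subsetProb p E P + subsetProb p E Q := by
  simpa [add_comm, or_comm] using subsetProb_exists hp univ fun (b : Bool) => bif b then P else Q

theorem subsetProb_union (h : Disjoint E₁ E₂) (P : Finset α → Prop) :
    subsetProb p (E₁ ∪ E₂) P =
      subsetExp p E₁ fun S => subsetProb p E₂ fun T => P (S ∪ T) :=
  subsetExp_union h _

theorem subsetProb_inter_of_subset (h : E₁ ⊆ E) (P : Finset α → Prop) :
    subsetProb p E (fun S => P (S ∩ E₁)) = subsetProb p E₁ P :=
  subsetExp_inter_of_subset h fun S => open Classical in if P S then (1 : ℝ) else 0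

theorem subsetProb_subset (h : T ⊆ E) : subsetProb p E (T ⊆ ·) = p ^ #T := by
  have hinter : ∀ S ⊆ E, (T ⊆ S ↔ T ⊆ S ∩ T) := fun S _ => by rw [subset_inter_iff]; simp
  rw [subsetProb_congr hinter, subsetProb_inter_of_subset h (T ⊆ ·), subsetProb, subsetExp,
    sum_eq_single T]
  · simp
  · intro S hS hne
    rw [if_neg fun hTS => hne ((mem_powerset.1 hS).antisymm hTS), mul_zero]
  · simp

theorem subsetProb_le_card_inter_le (hp : p ∈ Set.Icc 0 1) {t M : ℝ} (ht : 1 ≤ t) (i : ℕ)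
    {C : Finset α} (hC : (#C : ℝ) ≤ M) :
    subsetProb p E (fun S => i ≤ #(S ∩ C)) ≤ Real.exp (p * t * M) / t ^ i := by
  have ht0 : 0 < t := by linarith
  have hp0 : 0 ≤ p := hp.1
  calc subsetProb p E (fun S => i ≤ #(S ∩ C))
      ≤ subsetExp p E fun S => (t ^ i)⁻¹ * t ^ #(S ∩ C) := by
        refine subsetProb_le_subsetExp hp (fun S _ => by positivity) fun S _ hi => ?_
        rw [inv_mul_eq_div, one_le_div (by positivity)]
        exact pow_le_pow_right₀ ht hi
    _ ≤ (t ^ i)⁻¹ * Real.exp (p * (t - 1) * #(E ∩ C)) := by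
        rw [subsetExp_mul_left, subsetExp_pow_card_inter]
        gcongr
        exact mul_add_one_sub_pow_le_exp hp ht0.le _
    _ ≤ Real.exp (p * t * M) / t ^ i := by
        rw [inv_mul_eq_div]
        have hcard : (#(E ∩ C) : ℝ) ≤ M := le_trans (mod_cast card_le_card inter_subset_right) hC
        gcongr
        linarith

theorem subsetProb_le_card_inter_exposed_le (h : E₁ ⊆ E) (hp : p ∈ Set.Icc 0 1) {t M : ℝ}
    (ht : 1 ≤ t) (i : ℕ) {C : Finset α → Finset α} (hC : ∀ S, C (S ∩ E₁) = C S)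
    (hdisj : ∀ S, Disjoint (C S) E₁) :
    subsetProb p E (fun S => (#(C S) : ℝ) ≤ M ∧ i ≤ #(S ∩ C S)) ≤
      Real.exp (p * t * M) / t ^ i := by
  rw [← union_sdiff_of_subset h, subsetProb_union disjoint_sdiff]
  refine subsetExp_le_of_forall_le hp fun S hS => ?_
  have hexposed : ∀ T ⊆ E \ E₁, C (S ∪ T) = C S ∧ (S ∪ T) ∩ C S = T ∩ C S := by
    intro T hT
    have hST := union_inter_eq_left_of_subset_of_disjoint hS (disjoint_sdiff.symm.mono_left hT)
    refine ⟨by rw [← hC, hST], ?_⟩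
    rw [union_inter_distrib_right,
      disjoint_iff_inter_eq_empty.1 ((hdisj S).symm.mono_left hS), empty_union]
  by_cases hM : (#(C S) : ℝ) ≤ M
  · refine le_trans (subsetProb_mono hp fun T hT hi => ?_) (subsetProb_le_card_inter_le hp ht i hM)
    rw [(hexposed T hT).1, (hexposed T hT).2] at hi
    exact hi.2
  · rw [subsetProb_eq_zero fun T hT hi => hM ((hexposed T hT).1 ▸ hi.1)]
    have : 0 < t := by linarith
    positivity

end RandomSubset

section Construction

variable {V M : Type*}

/-- The base graph of colour `c`. The two base graphs are encoded by one set of coloured pairs, so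
that a single random subset of `Bool × Sym2 M` describes both. -/
def baseGraph (S : Finset (Bool × Sym2 M)) (c : Bool) : SimpleGraph M :=
  SimpleGraph.fromEdgeSet {e | (c, e) ∈ S}

/-- The graph obtained by pulling back the base graphs `H` along the maps `π` and deleting every
pair that has a common neighbour in one of the two base graphs. -/
def twoBite (π : Bool → V → M) (H : Bool → SimpleGraph M) : SimpleGraph V where
  Adj u v := (∃ c, (H c).Adj (π c u) (π c v)) ∧
    ¬∃ c x, (H c).Adj (π c u) x ∧ (H c).Adj (π c v) x
  symm := ⟨fun _ _ h => ⟨h.1.imp fun _ h => h.symm, fun ⟨c, x, hu, hv⟩ => h.2 ⟨c, x, hv, hu⟩⟩⟩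
  loopless := ⟨fun _ h => h.1.elim fun c h => (H c).irrefl h⟩

theorem baseGraph_adj {S : Finset (Bool × Sym2 M)} {c : Bool} {x y : M} :
    (baseGraph S c).Adj x y ↔ (c, s(x, y)) ∈ S ∧ x ≠ y :=
  SimpleGraph.fromEdgeSet_adj _

instance [DecidableEq M] (S : Finset (Bool × Sym2 M)) (c : Bool) :
    DecidableRel (baseGraph S c).Adj :=
  fun _ _ => decidable_of_iff' _ baseGraph_adj

-- Two of the three edges of a triangle have the same colour, and their common end is then a
-- common neighbour of the ends of the third edge.
theorem cliqueFree_three_twoBite (π : Bool → V → M) (H : Bool → SimpleGraph M) :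
    (twoBite π H).CliqueFree 3 := by
  classical
  intro T hT
  obtain ⟨u, v, w, ⟨⟨i, hi⟩, huv⟩, ⟨⟨j, hj⟩, huw⟩, ⟨⟨l, hl⟩, hvw⟩, -⟩ :=
    SimpleGraph.is3Clique_iff.1 hT
  have hcolours : i = j ∨ i = l ∨ j = l := by
    cases i <;> cases j <;> cases l <;> simp
  rcases hcolours with rfl | rfl | rfl
  · exact hvw ⟨i, _, hi.symm, hj.symm⟩
  · exact huw ⟨i, _, hi, hl.symm⟩
  · exact huv ⟨j, _, hj, hl⟩

/-- The neighbours of `x` that lie in `A`. -/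
def neighborsIn (G : SimpleGraph M) [DecidableRel G.Adj] (A : Finset M) (x : M) : Finset M :=
  {y ∈ A | G.Adj x y}

theorem mem_neighborsIn {G : SimpleGraph M} [DecidableRel G.Adj] {A : Finset M} {x y : M} :
    y ∈ neighborsIn G A x ↔ y ∈ A ∧ G.Adj x y :=
  mem_filter

theorem neighborsIn_subset (G : SimpleGraph M) [DecidableRel G.Adj] (A : Finset M) (x : M) :
    neighborsIn G A x ⊆ A :=
  filter_subset _ _

/-- The size of the fibre of `f` over `y` in `I`. -/
def fiberCard [DecidableEq M] (f : V → M) (I : Finset V) (y : M) : ℕ :=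
  #{u ∈ I | f u = y}

/-- A chosen element of `I` above `y`; meaningful only for `y` in the image of `I`. -/
noncomputable def representative [Nonempty V] (f : V → M) (I : Finset V) : M → V :=
  Function.invFunOn f I

/-- The projection to colour `c'` of the representative in `I` of the base vertex `y` of
colour `c`. -/
noncomputable def transfer [Nonempty V] (π : Bool → V → M) (I : Finset V) (c c' : Bool) (y : M) :
    M :=
  π c' (representative (π c) I y)

/-- The coloured unordered pair underlying an ordered pair. -/
def colouredPair (c : Bool) (q : M × M) : Bool × Sym2 M :=
  (c, s(q.1, q.2))

variable [DecidableEq M]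

/-- The ordered pairs of the projection of colour `c` that are closed by the base vertex `x` of
colour `c'`: their representatives have distinct projections of colour `c'`, both adjacent to
`x`. -/
noncomputable def closedPairs [Nonempty V] (π : Bool → V → M) (I : Finset V)
    (H : Bool → SimpleGraph M) [∀ c, DecidableRel (H c).Adj] (c c' : Bool) (x : M) :
    Finset (M × M) :=
  {q ∈ (I.image (π c)).offDiag | transfer π I c c' q.1 ≠ transfer π I c c' q.2 ∧
    (H c').Adj (transfer π I c c' q.1) x ∧ (H c').Adj (transfer π I c c' q.2) x}

/-- The coloured pairs of colour `c` that are closed by a base vertex inside the projection of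
colour `c'`. -/
noncomputable def innerPairs [Nonempty V] (π : Bool → V → M) (I : Finset V)
    (H : Bool → SimpleGraph M) [∀ c, DecidableRel (H c).Adj] (c c' : Bool) :
    Finset (Bool × Sym2 M) :=
  ((I.image (π c')).biUnion (closedPairs π I H c c')).image (colouredPair c)

/-- The ordered pairs of the projection of colour `c` that are not closed by a base vertex outside
the projections, and whose representatives do not coincide in any projection. -/
noncomputable def openOrderedPairs [Fintype M] [Nonempty V] (π : Bool → V → M) (I : Finset V)
    (H : Bool → SimpleGraph M) [∀ c, DecidableRel (H c).Adj] (c : Bool) : Finset (M × M) :=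
  {q ∈ (I.image (π c)).offDiag | ∀ c', transfer π I c c' q.1 ≠ transfer π I c c' q.2 ∧
    ∀ x ∉ I.image (π c'), q ∉ closedPairs π I H c c' x}

/-- The coloured pairs underlying the open ordered pairs of both colours. If `I` is independent in
the pulled back graph, then each of them that is an edge of a base graph is an inner pair. -/
noncomputable def openPairs [Fintype M] [Nonempty V] (π : Bool → V → M) (I : Finset V)
    (H : Bool → SimpleGraph M) [∀ c, DecidableRel (H c).Adj] : Finset (Bool × Sym2 M) :=
  univ.biUnion fun c => (openOrderedPairs π I H c).image (colouredPair c)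

/-- The total weight `1 + w y * w y'` of the ordered pairs in `N`. It bounds the number of pairs,
of both colours, that are closed by a base vertex with neighbourhood `N`: a pair of the same colour
is counted by `1`, and the pairs of the other colour by the product of the fibre sizes. -/
def pairWeight (w : M → ℕ) (N : Finset M) : ℕ :=
  ∑ q ∈ N.offDiag, (1 + w q.1 * w q.2)

/-- The total pair weight of the neighbourhoods of the base vertices outside the projections. -/
def outerPairWeight [Fintype M] (π : Bool → V → M) (I : Finset V) (H : Bool → SimpleGraph M)
    [∀ c, DecidableRel (H c).Adj] : ℕ :=
  ∑ c, ∑ x ∈ (I.image (π c))ᶜ,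
    pairWeight (fiberCard (π c) I) (neighborsIn (H c) (I.image (π c)) x)

variable [Nonempty V] {π : Bool → V → M} {I : Finset V} {c c' : Bool} {x y : M}

theorem representative_mem {f : V → M} (hy : y ∈ I.image f) : representative f I y ∈ I :=
  Function.invFunOn_mem (mem_image.1 hy)

theorem apply_representative {f : V → M} (hy : y ∈ I.image f) : f (representative f I y) = y :=
  Function.invFunOn_eq (mem_image.1 hy)

theorem injOn_representative (f : V → M) (I : Finset V) :
    Set.InjOn (representative f I) (I.image f : Set M) := fun _ hy _ hz h => by
  rw [← apply_representative hy, h, apply_representative hz]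

theorem transfer_self (hy : y ∈ I.image (π c)) : transfer π I c c y = y :=
  apply_representative hy

theorem transfer_mem (hy : y ∈ I.image (π c)) (c' : Bool) :
    transfer π I c c' y ∈ I.image (π c') :=
  mem_image_of_mem _ (representative_mem hy)

theorem inter_openPairs_subset [Fintype M] {S : Finset (Bool × Sym2 M)}
    (hI : (twoBite π (baseGraph S)).IsIndepSet (I : Set V)) :
    S ∩ openPairs π I (baseGraph S) ⊆
      univ.biUnion fun c : Bool × Bool => S ∩ innerPairs π I (baseGraph S) c.1 c.2 := by
  intro e he
  obtain ⟨heS, heopen⟩ := mem_inter.1 he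
  obtain ⟨c, -, hec⟩ := mem_biUnion.1 heopen
  obtain ⟨⟨y, y'⟩, hyy', rfl⟩ := mem_image.1 hec
  obtain ⟨hq, hopen⟩ := mem_filter.1 hyy'
  obtain ⟨hy, hy', hne⟩ := mem_offDiag.1 hq
  have hadj : (baseGraph S c).Adj (transfer π I c c y) (transfer π I c c y') := by
    rw [transfer_self hy, transfer_self hy']
    exact baseGraph_adj.2 ⟨heS, hne⟩
  have hnot : ¬(twoBite π (baseGraph S)).Adj (representative (π c) I y)
      (representative (π c) I y') :=
    hI (representative_mem hy) (representative_mem hy') fun h =>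
      hne (injOn_representative _ _ hy hy' h)
  obtain ⟨c', x, hx, hx'⟩ := not_not.1 fun h => hnot ⟨⟨c, hadj⟩, h⟩
  have hclosed : (y, y') ∈ closedPairs π I (baseGraph S) c c' x :=
    mem_filter.2 ⟨hq, (hopen c').1, hx, hx'⟩
  have hinner : x ∈ I.image (π c') := by
    by_contra hx
    exact (hopen c').2 x hx hclosed
  exact mem_biUnion.2 ⟨(c, c'), mem_univ _, mem_inter.2 ⟨heS,
    mem_image_of_mem _ (mem_biUnion.2 ⟨x, hinner, hclosed⟩)⟩⟩

end Construction

section ClosedPairs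

variable {V M : Type*} [DecidableEq M] [Nonempty V]

theorem card_le_two_mul_card_image_colouredPair (c : Bool) (P : Finset (M × M)) :
    #P ≤ 2 * #(P.image (colouredPair c)) := by
  refine card_le_mul_card_image P 2 fun b hb => ?_
  obtain ⟨⟨y, y'⟩, -, rfl⟩ := mem_image.1 hb
  refine le_trans (card_le_card (t := {(y, y'), (y', y)}) ?_) card_le_two
  rintro ⟨z, z'⟩ hz
  simpa [colouredPair] using (mem_filter.1 hz).2

variable {π : Bool → V → M} {I : Finset V} {H : Bool → SimpleGraph M}
  [∀ c, DecidableRel (H c).Adj]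

theorem sum_card_openOrderedPairs_le [Fintype M] :
    ∑ c, #(openOrderedPairs π I H c) ≤ 2 * #(openPairs π I H) := by
  rw [openPairs, card_biUnion, mul_sum]
  · exact sum_le_sum fun c _ => card_le_two_mul_card_image_colouredPair c _
  · intro c _ c' _ hne
    refine disjoint_left.2 fun e he he' => hne ?_
    obtain ⟨q, -, rfl⟩ := mem_image.1 he
    obtain ⟨q', -, h⟩ := mem_image.1 he'
    exact (congrArg Prod.fst h).symm

theorem card_closedPairs_self_le (c : Bool) (x : M) :
    #(closedPairs π I H c c x) ≤ #(neighborsIn (H c) (I.image (π c)) x).offDiag := by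
  refine card_le_card fun q hq => ?_
  simp only [closedPairs, mem_filter, mem_offDiag] at hq
  obtain ⟨⟨hy, hy', hne⟩, -, hadj, hadj'⟩ := hq
  rw [transfer_self hy] at hadj
  rw [transfer_self hy'] at hadj'
  simp only [mem_offDiag, mem_neighborsIn]
  exact ⟨⟨hy, hadj.symm⟩, ⟨hy', hadj'.symm⟩, hne⟩

theorem card_closedPairs_le (c c' : Bool) (x : M) :
    #(closedPairs π I H c c' x) ≤ ∑ q ∈ (neighborsIn (H c') (I.image (π c')) x).offDiag,
      fiberCard (π c') I q.1 * fiberCard (π c') I q.2 := by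
  rw [card_eq_sum_card_fiberwise (f := Prod.map (transfer π I c c') (transfer π I c c'))
    (t := (neighborsIn (H c') (I.image (π c')) x).offDiag)]
  · refine sum_le_sum fun z _ => ?_
    rw [fiberCard, fiberCard, ← card_product]
    refine card_le_card_of_injOn
      (Prod.map (representative (π c) I) (representative (π c) I)) ?_ ?_
    · intro q hq
      simp only [closedPairs, coe_filter, mem_filter, mem_offDiag, Set.mem_ofPred_eq] at hq
      obtain ⟨⟨⟨hy, hy', -⟩, -⟩, rfl⟩ := hq
      simp only [coe_product, Set.mem_prod, coe_filter, Set.mem_ofPred_eq]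
      exact ⟨⟨representative_mem hy, rfl⟩, representative_mem hy', rfl⟩
    · intro q hq q' hq' h
      simp only [closedPairs, coe_filter, mem_filter, mem_offDiag, Set.mem_ofPred_eq] at hq hq'
      rw [Prod.map_apply, Prod.map_apply, Prod.mk.injEq] at h
      exact Prod.ext (injOn_representative _ _ hq.1.1.1 hq'.1.1.1 h.1)
        (injOn_representative _ _ hq.1.1.2.1 hq'.1.1.2.1 h.2)
  · intro q hq
    simp only [closedPairs, coe_filter, mem_offDiag, Set.mem_ofPred_eq] at hq
    obtain ⟨⟨hy, hy', -⟩, hne, hadj, hadj'⟩ := hq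
    simp only [coe_offDiag, Set.mem_offDiag, mem_coe, mem_neighborsIn]
    exact ⟨⟨transfer_mem hy _, hadj.symm⟩, ⟨transfer_mem hy' _, hadj'.symm⟩, hne⟩

theorem sum_card_closedPairs_le (c' : Bool) (x : M) : ∑ c, #(closedPairs π I H c c' x) ≤
    pairWeight (fiberCard (π c') I) (neighborsIn (H c') (I.image (π c')) x) := by
  have hsum : ∑ c, #(closedPairs π I H c c' x) =
      #(closedPairs π I H c' c' x) + #(closedPairs π I H (!c') c' x) := by
    cases c' <;> simp [add_comm]
  rw [hsum, pairWeight, sum_add_distrib, sum_const, smul_eq_mul, mul_one]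
  exact add_le_add (card_closedPairs_self_le c' x) (card_closedPairs_le _ c' x)

theorem card_coincident_le (c : Bool) {F : ℕ} (hF : ∀ c y, fiberCard (π c) I y ≤ F) :
    #{q ∈ (I.image (π c)).offDiag | ∃ c', transfer π I c c' q.1 = transfer π I c c' q.2} ≤
      #I * F := by
  calc _ ≤ #(I.sigma fun u => {v ∈ I | π (!c) v = π (!c) u}) := by
        refine card_le_card_of_injOn
          (fun q => ⟨representative (π c) I q.1, representative (π c) I q.2⟩) ?_ ?_
        · intro q hq
          simp only [coe_filter, mem_offDiag, Set.mem_ofPred_eq] at hq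
          obtain ⟨⟨hy, hy', hne⟩, c', hcoincide⟩ := hq
          obtain rfl : c' = !c := by
            refine (Bool.eq_not).2 ?_
            rintro rfl
            rw [transfer_self hy, transfer_self hy'] at hcoincide
            exact hne hcoincide
          simpa [representative_mem hy, representative_mem hy', transfer] using hcoincide.symm
        · intro q hq q' hq' h
          simp only [coe_filter, mem_offDiag, Set.mem_ofPred_eq] at hq hq'
          simp only [Sigma.mk.injEq, heq_eq_eq] at h
          exact Prod.ext (injOn_representative _ _ hq.1.1 hq'.1.1 h.1)
            (injOn_representative _ _ hq.1.2.1 hq'.1.2.1 h.2)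
    _ = ∑ u ∈ I, fiberCard (π (!c)) I (π (!c) u) := card_sigma _ _
    _ ≤ #I * F := sum_le_card_nsmul _ _ _ fun u _ => hF _ _

variable [Fintype M]

theorem offDiag_subset_open_union_coincident_union_closed (c : Bool) :
    (I.image (π c)).offDiag ⊆ (openOrderedPairs π I H c ∪
        {q ∈ (I.image (π c)).offDiag | ∃ c', transfer π I c c' q.1 = transfer π I c c' q.2}) ∪
      univ.biUnion fun c' => (I.image (π c'))ᶜ.biUnion (closedPairs π I H c c') := by
  intro q hq
  simp only [openOrderedPairs, mem_union, mem_filter, mem_biUnion, mem_univ, mem_compl, true_and]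
  by_cases hcoincide : ∃ c', transfer π I c c' q.1 = transfer π I c c' q.2
  · exact Or.inl (Or.inr ⟨hq, hcoincide⟩)
  by_cases hclosed : ∃ c', ∃ x ∉ I.image (π c'), q ∈ closedPairs π I H c c' x
  · exact Or.inr hclosed
  push Not at hcoincide hclosed
  exact Or.inl (Or.inl ⟨hq, fun c' => ⟨hcoincide c', hclosed c'⟩⟩)

theorem sum_card_offDiag_le {F : ℕ} (hF : ∀ c y, fiberCard (π c) I y ≤ F) :
    ∑ c, #(I.image (π c)).offDiag ≤
      2 * #(openPairs π I H) + 2 * (#I * F) + outerPairWeight π I H := by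
  have hcolour : ∀ c, #(I.image (π c)).offDiag ≤ #(openOrderedPairs π I H c) + #I * F +
      ∑ c', ∑ x ∈ (I.image (π c'))ᶜ, #(closedPairs π I H c c' x) := fun c =>
    (card_le_card (offDiag_subset_open_union_coincident_union_closed c)).trans <|
      (card_union_le _ _).trans <| add_le_add
        ((card_union_le _ _).trans (add_le_add le_rfl (card_coincident_le c hF)))
        (card_biUnion_le.trans (sum_le_sum fun _ _ => card_biUnion_le))
  refine (sum_le_sum fun c _ => hcolour c).trans ?_
  rw [sum_add_distrib, sum_add_distrib]
  refine add_le_add (add_le_add sum_card_openOrderedPairs_le (by simp)) ?_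
  rw [sum_comm]
  refine sum_le_sum fun c' _ => ?_
  rw [sum_comm]
  exact sum_le_sum fun x _ => sum_card_closedPairs_le c' x

end ClosedPairs

-- The second Bonferroni inequality, with a uniform bound on the pairwise intersections.
theorem sum_card_le_card_biUnion_add {ι α : Type*} [DecidableEq α] (T : Finset ι)
    (B : ι → Finset α) {q : ℕ} (hq : ∀ x ∈ T, ∀ y ∈ T, x ≠ y → #(B x ∩ B y) ≤ q) :
    ∑ x ∈ T, #(B x) ≤ #(T.biUnion B) + #T * #T * q := by
  classical
  induction T using Finset.induction_on with
  | empty => simp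
  | insert a T ha ih =>
    have ih := ih fun x hx y hy => hq x (mem_insert_of_mem hx) y (mem_insert_of_mem hy)
    have hinter : #(B a ∩ T.biUnion B) ≤ #T * q := by
      rw [inter_biUnion]
      exact card_biUnion_le_card_mul _ _ _ fun y hy =>
        hq a (mem_insert_self _ _) y (mem_insert_of_mem hy) (ne_of_mem_of_not_mem hy ha).symm
    have hunion := card_union_add_card_inter (B a) (T.biUnion B)
    rw [sum_insert ha, biUnion_insert, card_insert_of_notMem ha]
    nlinarith

section Centres

variable {V M : Type*}

/-- The elements of `I` whose projection is adjacent to `x`. -/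
def pullbackNeighbors (f : V → M) (I : Finset V) (G : SimpleGraph M) [DecidableRel G.Adj] (x : M) :
    Finset V :=
  {u ∈ I | G.Adj x (f u)}

/-- Every vertex of `G` is adjacent to the projections of at most `D` elements of `V`. -/
def DegreeLE [Fintype V] (f : V → M) (D : ℝ) (G : SimpleGraph M) [DecidableRel G.Adj] : Prop :=
  ∀ x, (#(pullbackNeighbors f univ G x) : ℝ) ≤ D

/-- The exponential cost charged to a vertex with neighbourhood `N`: half the pair weight at
probability `p` when the total weight of `N` is at most `W`, and otherwise the linear bound that is
available when the total weight is at most `D`. -/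
noncomputable def cost (p W D : ℝ) (w : M → ℕ) (N : Finset M) : ℝ :=
  if ((∑ y ∈ N, w y : ℕ) : ℝ) ≤ W then p / 2 * pairWeight w N else p * D * #N

theorem pairWeight_le (w : M → ℕ) (N : Finset M) :
    pairWeight w N ≤ #N ^ 2 + (∑ y ∈ N, w y) ^ 2 := by
  have hsub : N.offDiag ⊆ N ×ˢ N := fun q hq =>
    mem_product.2 ⟨(mem_offDiag.1 hq).1, (mem_offDiag.1 hq).2.1⟩
  calc pairWeight w N ≤ ∑ q ∈ N ×ˢ N, (1 + w q.1 * w q.2) := sum_le_sum_of_subset hsub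
    _ = #N ^ 2 + (∑ y ∈ N, w y) ^ 2 := by
      simp only [sum_add_distrib, sum_const, smul_eq_mul, mul_one, card_product, sq, sum_mul_sum,
        sum_product]

variable {f : V → M} {I : Finset V} {G : SimpleGraph M} [DecidableRel G.Adj] {x : M} {F q s : ℕ}
  {p W D : ℝ}

theorem card_pullbackNeighbors_le [Fintype V] (hD : DegreeLE f D G) (I : Finset V) (x : M) :
    (#(pullbackNeighbors f I G x) : ℝ) ≤ D :=
  (Nat.cast_le.2 (card_le_card (filter_subset_filter _ (subset_univ I)))).trans (hD x)

variable [DecidableEq M]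

/-- Distinct vertices of `G` have at most `q` common neighbours. -/
def CodegreeLE [Fintype M] (q : ℕ) (G : SimpleGraph M) [DecidableRel G.Adj] : Prop :=
  ∀ x y, x ≠ y → #(neighborsIn G univ x ∩ neighborsIn G univ y) ≤ q

/-- The elements of `I` that are not the chosen representative of their projection. -/
noncomputable def repeats [DecidableEq V] [Nonempty V] (f : V → M) (I : Finset V) : Finset V :=
  I \ (I.image f).image (representative f I)

theorem sum_fiberCard (f : V → M) (I : Finset V) (N : Finset M) :
    ∑ y ∈ N, fiberCard f I y = #{u ∈ I | f u ∈ N} :=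
  sum_card_fiberwise_eq_card_filter I N f

theorem sum_fiberCard_neighborsIn (f : V → M) (I : Finset V) (G : SimpleGraph M)
    [DecidableRel G.Adj] (x : M) :
    ∑ y ∈ neighborsIn G (I.image f) x, fiberCard f I y = #(pullbackNeighbors f I G x) := by
  rw [sum_fiberCard, pullbackNeighbors]
  exact congrArg card <| filter_congr fun u hu =>
    mem_neighborsIn.trans (and_iff_right (mem_image_of_mem f hu))

theorem fiberCard_mono {J : Finset V} (h : J ⊆ I) (y : M) : fiberCard f J y ≤ fiberCard f I y :=
  card_le_card (filter_subset_filter _ h)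

theorem card_filter_apply_mem_le (hF : ∀ y, fiberCard f I y ≤ F) (X : Finset M) :
    #{u ∈ I | f u ∈ X} ≤ #X * F := by
  rw [← sum_fiberCard]
  exact sum_le_card_nsmul _ _ F fun y _ => hF y

theorem card_pullbackNeighbors_inter_le [DecidableEq V] [Fintype M] (hF : ∀ y, fiberCard f I y ≤ F)
    (hq : CodegreeLE q G) {x y : M} (hxy : x ≠ y) :
    #(pullbackNeighbors f I G x ∩ pullbackNeighbors f I G y) ≤ q * F := by
  calc #(pullbackNeighbors f I G x ∩ pullbackNeighbors f I G y)
      ≤ #{u ∈ I | f u ∈ neighborsIn G univ x ∩ neighborsIn G univ y} := by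
        refine card_le_card fun u hu => ?_
        simp only [pullbackNeighbors, mem_inter, mem_filter, mem_neighborsIn, mem_univ,
          true_and] at hu ⊢
        exact ⟨hu.1.1, hu.1.2, hu.2.2⟩
    _ ≤ #(neighborsIn G univ x ∩ neighborsIn G univ y) * F := card_filter_apply_mem_le hF _
    _ ≤ q * F := Nat.mul_le_mul_right _ (hq x y hxy)

theorem sum_card_pullbackNeighbors_le [Fintype M] (hF : ∀ y, fiberCard f I y ≤ F)
    (hq : CodegreeLE q G) (T : Finset M) :
    ∑ x ∈ T, #(pullbackNeighbors f I G x) ≤ #I + #T * #T * (q * F) := by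
  classical
  exact (sum_card_le_card_biUnion_add T (pullbackNeighbors f I G) fun _ _ _ _ hxy =>
    card_pullbackNeighbors_inter_le hF hq hxy).trans <|
    Nat.add_le_add_right (card_le_card (biUnion_subset.2 fun _ _ => filter_subset _ _)) _

theorem card_lt_of_forall_lt_card_pullbackNeighbors [Fintype M] (hF : ∀ y, fiberCard f I y ≤ F)
    (hq : CodegreeLE q G) (hs : (#I : ℝ) + s * s * (q * F) < s * W) {T : Finset M}
    (hT : ∀ x ∈ T, W < #(pullbackNeighbors f I G x)) : #T < s := by
  by_contra! h
  obtain ⟨T', hT', rfl⟩ := exists_subset_card_eq h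
  have hlower : (#T' : ℝ) * W ≤ ∑ x ∈ T', (#(pullbackNeighbors f I G x) : ℝ) := by
    rw [← nsmul_eq_mul]
    exact card_nsmul_le_sum _ _ _ fun x hx => (hT x (hT' hx)).le
  have hupper : ∑ x ∈ T', (#(pullbackNeighbors f I G x) : ℝ) ≤ #I + #T' * #T' * (q * F) := by
    exact_mod_cast sum_card_pullbackNeighbors_le hF hq T'
  linarith

section Repeats

variable [DecidableEq V] [Nonempty V]

theorem card_image_representative (f : V → M) (I : Finset V) :
    #((I.image f).image (representative f I)) = #(I.image f) :=
  card_image_of_injOn (injOn_representative f I)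

theorem card_repeats_add_card_image (f : V → M) (I : Finset V) :
    #(repeats f I) + #(I.image f) = #I := by
  have hsub : (I.image f).image (representative f I) ⊆ I :=
    image_subset_iff.2 fun y hy => representative_mem hy
  rw [← card_image_representative]
  exact card_sdiff_add_card_eq_card hsub

theorem card_pullbackNeighbors_eq (f : V → M) (I : Finset V) (G : SimpleGraph M)
    [DecidableRel G.Adj] (x : M) :
    #(pullbackNeighbors f I G x) =
      #(neighborsIn G (I.image f) x) + #(pullbackNeighbors f (repeats f I) G x) := by
  set R := (I.image f).image (representative f I) with hR
  have hinter : pullbackNeighbors f I G x ∩ R =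
      (neighborsIn G (I.image f) x).image (representative f I) := by
    ext u
    simp only [pullbackNeighbors, hR, mem_inter, mem_filter]
    constructor
    · rintro ⟨⟨-, hadj⟩, hu⟩
      obtain ⟨y, hy, rfl⟩ := mem_image.1 hu
      rw [apply_representative hy] at hadj
      exact mem_image_of_mem _ (mem_neighborsIn.2 ⟨hy, hadj⟩)
    · intro hu
      obtain ⟨y, hy, rfl⟩ := mem_image.1 hu
      obtain ⟨hyA, hadj⟩ := mem_neighborsIn.1 hy
      exact ⟨⟨representative_mem hyA, by rwa [apply_representative hyA]⟩, mem_image_of_mem _ hyA⟩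
  have hsdiff : pullbackNeighbors f I G x \ R = pullbackNeighbors f (repeats f I) G x := by
    ext u
    simp only [pullbackNeighbors, repeats, mem_sdiff, mem_filter, and_right_comm, ← hR]
  rw [← card_inter_add_card_sdiff _ R, hsdiff, hinter, card_image_of_injOn]
  exact (injOn_representative f I).mono (coe_subset.2 (neighborsIn_subset G _ x))

theorem half_mul_pairWeight_le (hp : 0 ≤ p) (hD : (#(pullbackNeighbors f I G x) : ℝ) ≤ D) :
    p / 2 * pairWeight (fiberCard f I) (neighborsIn G (I.image f) x) ≤
      cost p W D (fiberCard f I) (neighborsIn G (I.image f) x) +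
        p * D / 2 * (if W < #(pullbackNeighbors f I G x) then
          (#(pullbackNeighbors f (repeats f I) G x) : ℝ) else 0) := by
  rw [cost, sum_fiberCard_neighborsIn]
  by_cases hx : (#(pullbackNeighbors f I G x) : ℝ) ≤ W
  · simp [hx, hx.not_gt]
  rw [if_neg hx, if_pos (not_le.1 hx)]
  have hpair : (pairWeight (fiberCard f I) (neighborsIn G (I.image f) x) : ℝ) ≤
      (#(neighborsIn G (I.image f) x) : ℝ) ^ 2 + (#(pullbackNeighbors f I G x) : ℝ) ^ 2 := by
    have h := pairWeight_le (fiberCard f I) (neighborsIn G (I.image f) x)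
    rw [sum_fiberCard_neighborsIn] at h
    exact_mod_cast h
  have hcard : (#(pullbackNeighbors f I G x) : ℝ) =
      #(neighborsIn G (I.image f) x) + #(pullbackNeighbors f (repeats f I) G x) := by
    exact_mod_cast card_pullbackNeighbors_eq f I G x
  set d := (#(neighborsIn G (I.image f) x) : ℝ)
  set e := (#(pullbackNeighbors f (repeats f I) G x) : ℝ)
  have hd : 0 ≤ d := Nat.cast_nonneg _
  have he : 0 ≤ e := Nat.cast_nonneg _
  calc _ ≤ p / 2 * (d ^ 2 + (d + e) ^ 2) := by rw [← hcard]; gcongr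
    _ ≤ p / 2 * (2 * D * d + D * e) := by
      rw [hcard] at hD
      refine mul_le_mul_of_nonneg_left ?_ (by positivity)
      nlinarith
    _ = p * D * d + p * D / 2 * e := by ring

end Repeats

-- Few centres are heavy, and by the Bonferroni inequality their neighbourhoods are almost
-- disjoint, so that the repeats above them are hardly counted more than once.
theorem half_mul_sum_pairWeight_le [Nonempty V] [Fintype V] [Fintype M] (hp : 0 ≤ p) (hD₀ : 0 ≤ D)
    (hF : ∀ y, fiberCard f I y ≤ F) (hq : CodegreeLE q G) (hD : DegreeLE f D G)
    (hs : (#I : ℝ) + s * s * (q * F) < s * W) (X : Finset M) :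
    p / 2 * ∑ x ∈ X, (pairWeight (fiberCard f I) (neighborsIn G (I.image f) x) : ℝ) ≤
      ∑ x ∈ X, cost p W D (fiberCard f I) (neighborsIn G (I.image f) x) +
        p * D / 2 * ((#I : ℝ) - #(I.image f) + s * s * (q * F)) := by
  classical
  set T := {x ∈ X | W < #(pullbackNeighbors f I G x)}
  have hTs : #T < s :=
    card_lt_of_forall_lt_card_pullbackNeighbors hF hq hs fun x hx => (mem_filter.1 hx).2
  have hrepeats : (#(repeats f I) : ℝ) = #I - #(I.image f) := by
    rw [← card_repeats_add_card_image f I, Nat.cast_add, add_sub_cancel_right]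
  have hheavy : ∑ x ∈ T, (#(pullbackNeighbors f (repeats f I) G x) : ℝ) ≤
      #I - #(I.image f) + s * s * (q * F) := by
    rw [← hrepeats]
    have hsum := sum_card_pullbackNeighbors_le (I := repeats f I)
      (fun y => (fiberCard_mono sdiff_subset y).trans (hF y)) hq T
    have hsq : #T * #T * (q * F) ≤ s * s * (q * F) := by gcongr
    exact_mod_cast hsum.trans (add_le_add le_rfl hsq)
  calc _ ≤ _ := (mul_sum X _ _).trans_le <| sum_le_sum fun x _ =>
        half_mul_pairWeight_le (W := W) hp (card_pullbackNeighbors_le hD I x)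
    _ = _ := by rw [sum_add_distrib, ← mul_sum, ← sum_filter]
    _ ≤ _ := by gcongr

end Centres

section OuterPairs

variable {V M : Type*} [DecidableEq M]

/-- The pairs of colour `c` between `x` and `A`. -/
def star (c : Bool) (A : Finset M) (x : M) : Finset (Bool × Sym2 M) :=
  A.image fun y => (c, s(x, y))

variable {p : ℝ} {π : Bool → V → M} {I : Finset V} {c : Bool} {x y : M}

theorem neighborsIn_inter_star (S : Finset (Bool × Sym2 M)) (c : Bool) (A : Finset M) (x : M) :
    neighborsIn (baseGraph (S ∩ star c A x) c) A x = neighborsIn (baseGraph S c) A x := by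
  refine filter_congr fun y hy => ?_
  have hmem : (c, s(x, y)) ∈ star c A x := mem_image_of_mem _ hy
  simp only [baseGraph_adj, mem_inter, hmem, and_true]

theorem neighborsIn_image_star {A N : Finset M} (hx : x ∉ A) (hN : N ⊆ A) :
    neighborsIn (baseGraph (star c N x) c) A x = N := by
  ext y
  rw [mem_neighborsIn, baseGraph_adj, star, mem_image]
  simp only [Prod.mk.injEq, true_and]
  constructor
  · rintro ⟨hy, ⟨z, hz, h⟩, -⟩
    rcases Sym2.eq_iff.1 h with ⟨-, rfl⟩ | ⟨rfl, rfl⟩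
    · exact hz
    · exact absurd hy hx
  · exact fun hy => ⟨hN hy, ⟨y, hy, rfl⟩, (ne_of_mem_of_not_mem (hN hy) hx).symm⟩

theorem subsetExp_star {A : Finset M} (hx : x ∉ A) (g : Finset M → ℝ) :
    subsetExp p (star c A x) (fun S => g (neighborsIn (baseGraph S c) A x)) = subsetExp p A g := by
  rw [star, subsetExp_image]
  · exact subsetExp_congr fun N hN => congrArg g (neighborsIn_image_star hx hN)
  · intro y _ y' _ h
    rcases Sym2.eq_iff.1 (congrArg Prod.snd h) with ⟨-, h⟩ | ⟨hxy', hyx⟩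
    · exact h
    · exact hyx.trans hxy'

variable [Fintype M]

/-- The coloured base vertices outside the projections of `I`. -/
def outerVertices (π : Bool → V → M) (I : Finset V) : Finset (Bool × M) :=
  {i | i.2 ∉ I.image (π i.1)}

/-- The coloured pairs with one end in the projection of `I` of their colour. -/
def outerPairs (π : Bool → V → M) (I : Finset V) : Finset (Bool × Sym2 M) :=
  (outerVertices π I).biUnion fun i => star i.1 (I.image (π i.1)) i.2

theorem pairwiseDisjoint_star : (outerVertices π I : Set (Bool × M)).PairwiseDisjoint
    fun i => star i.1 (I.image (π i.1)) i.2 := by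
  rintro ⟨c, x⟩ hx ⟨c', x'⟩ hx' hne
  refine disjoint_left.2 fun e he he' => ?_
  obtain ⟨y, hy, rfl⟩ := mem_image.1 he
  obtain ⟨y', -, h⟩ := mem_image.1 he'
  simp only [Prod.mk.injEq, Sym2.eq_iff] at h
  obtain ⟨rfl, ⟨rfl, rfl⟩ | ⟨rfl, rfl⟩⟩ := h
  · exact hne rfl
  · exact (mem_filter.1 hx').2 hy

theorem sum_outerVertices (g : Bool → M → ℝ) :
    ∑ i ∈ outerVertices π I, g i.1 i.2 = ∑ c, ∑ x ∈ (I.image (π c))ᶜ, g c x :=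
  (sum_finset_product' _ univ (fun c => (I.image (π c))ᶜ) (by simp [outerVertices]))

theorem mem_outerPairs (hx : x ∉ I.image (π c)) (hy : y ∈ I.image (π c)) :
    (c, s(x, y)) ∈ outerPairs π I :=
  mem_biUnion.2 ⟨(c, x), mem_filter.2 ⟨mem_univ _, hx⟩, mem_image_of_mem _ hy⟩

theorem baseGraph_inter_outerPairs_adj (S : Finset (Bool × Sym2 M)) (hx : x ∉ I.image (π c))
    (hy : y ∈ I.image (π c)) :
    (baseGraph (S ∩ outerPairs π I) c).Adj x y ↔ (baseGraph S c).Adj x y := by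
  simp only [baseGraph_adj, mem_inter, mem_outerPairs hx hy, and_true]

theorem neighborsIn_inter_outerPairs (S : Finset (Bool × Sym2 M)) (hx : x ∉ I.image (π c)) :
    neighborsIn (baseGraph (S ∩ outerPairs π I) c) (I.image (π c)) x =
      neighborsIn (baseGraph S c) (I.image (π c)) x :=
  filter_congr fun _ hy => baseGraph_inter_outerPairs_adj S hx hy

variable [Nonempty V]

theorem mem_closedPairs_inter_outerPairs (S : Finset (Bool × Sym2 M)) {c' : Bool}
    (hx : x ∉ I.image (π c')) (q : M × M) :
    q ∈ closedPairs π I (baseGraph (S ∩ outerPairs π I)) c c' x ↔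
      q ∈ closedPairs π I (baseGraph S) c c' x := by
  simp only [closedPairs, mem_filter]
  refine and_congr_right fun hq => ?_
  obtain ⟨hy, hy', -⟩ := mem_offDiag.1 hq
  simp only [SimpleGraph.adj_comm _ _ x, baseGraph_inter_outerPairs_adj S hx (transfer_mem hy c'),
    baseGraph_inter_outerPairs_adj S hx (transfer_mem hy' c')]

theorem openPairs_inter_outerPairs (S : Finset (Bool × Sym2 M)) :
    openPairs π I (baseGraph (S ∩ outerPairs π I)) = openPairs π I (baseGraph S) := by
  have hordered : ∀ c, openOrderedPairs π I (baseGraph (S ∩ outerPairs π I)) c =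
      openOrderedPairs π I (baseGraph S) c := fun c =>
    filter_congr fun q _ => forall_congr' fun c' => and_congr_right fun _ =>
      forall₂_congr fun x hx => not_congr (mem_closedPairs_inter_outerPairs S hx q)
  simp only [openPairs, hordered]

theorem disjoint_openPairs_outerPairs (H : Bool → SimpleGraph M)
    [∀ c, DecidableRel (H c).Adj] : Disjoint (openPairs π I H) (outerPairs π I) := by
  refine disjoint_left.2 fun e he he' => ?_
  obtain ⟨c, -, hec⟩ := mem_biUnion.1 he
  obtain ⟨⟨y, y'⟩, hq, rfl⟩ := mem_image.1 hec
  obtain ⟨hy, hy', -⟩ := mem_offDiag.1 (mem_filter.1 hq).1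
  obtain ⟨⟨c', x⟩, hx, hstar⟩ := mem_biUnion.1 he'
  obtain ⟨z, -, h⟩ := mem_image.1 hstar
  simp only [colouredPair, Prod.mk.injEq, Sym2.eq_iff] at h
  have hx := (mem_filter.1 hx).2
  obtain ⟨rfl, ⟨rfl, rfl⟩ | ⟨rfl, rfl⟩⟩ := h
  · exact hx hy
  · exact hx hy'

end OuterPairs

section FewOpenPairs

variable {V M : Type*} [Fintype M] [DecidableEq M] {π : Bool → V → M} {I : Finset V}
  {p W D R z η : ℝ}

/-- The total cost of the neighbourhoods of the base vertices outside the projections. -/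
noncomputable def outerCost (π : Bool → V → M) (I : Finset V) (p W D : ℝ) (H : Bool → SimpleGraph M)
    [∀ c, DecidableRel (H c).Adj] : ℝ :=
  ∑ c, ∑ x ∈ (I.image (π c))ᶜ,
    cost p W D (fiberCard (π c) I) (neighborsIn (H c) (I.image (π c)) x)

/-- The outer pair weight is controlled by the outer cost, up to `R`. -/
def CostBound (π : Bool → V → M) (I : Finset V) (p W D R : ℝ) (H : Bool → SimpleGraph M)
    [∀ c, DecidableRel (H c).Adj] : Prop :=
  p / 2 * outerPairWeight π I H ≤ outerCost π I p W D H + R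

theorem costBound_of_degreeLE_of_codegreeLE [Nonempty V] [Fintype V] {H : Bool → SimpleGraph M}
    [∀ c, DecidableRel (H c).Adj] {F q s : ℕ} (hp : 0 ≤ p) (hD₀ : 0 ≤ D)
    (hF : ∀ c y, fiberCard (π c) I y ≤ F) (hD : ∀ c, DegreeLE (π c) D (H c))
    (hq : ∀ c, CodegreeLE q (H c)) (hs : (#I : ℝ) + s * s * (q * F) < s * W) :
    CostBound π I p W D
      (∑ c, p * D / 2 * ((#I : ℝ) - #(I.image (π c)) + s * s * (q * F))) H := by
  unfold CostBound outerPairWeight outerCost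
  rw [← sum_add_distrib, Nat.cast_sum, mul_sum]
  refine sum_le_sum fun c _ => ?_
  rw [Nat.cast_sum]
  exact half_mul_sum_pairWeight_le hp hD₀ (hF c) (hq c) (hD c) hs _

theorem outerPairWeight_inter_outerPairs (S : Finset (Bool × Sym2 M)) :
    outerPairWeight π I (baseGraph (S ∩ outerPairs π I)) = outerPairWeight π I (baseGraph S) :=
  sum_congr rfl fun c _ => sum_congr rfl fun x hx => by
    rw [neighborsIn_inter_outerPairs S (mem_compl.1 hx)]

theorem outerCost_inter_outerPairs (S : Finset (Bool × Sym2 M)) :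
    outerCost π I p W D (baseGraph (S ∩ outerPairs π I)) = outerCost π I p W D (baseGraph S) :=
  sum_congr rfl fun c _ => sum_congr rfl fun x hx => by
    rw [neighborsIn_inter_outerPairs S (mem_compl.1 hx)]

theorem costBound_inter_outerPairs (S : Finset (Bool × Sym2 M)) :
    CostBound π I p W D R (baseGraph (S ∩ outerPairs π I)) ↔
      CostBound π I p W D R (baseGraph S) := by
  rw [CostBound, CostBound, outerPairWeight_inter_outerPairs, outerCost_inter_outerPairs]

theorem outerCost_baseGraph (S : Finset (Bool × Sym2 M)) :
    outerCost π I p W D (baseGraph S) = ∑ i ∈ outerVertices π I,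
      cost p W D (fiberCard (π i.1) I) (neighborsIn
        (baseGraph (S ∩ star i.1 (I.image (π i.1)) i.2) i.1) (I.image (π i.1)) i.2) := by
  simp only [neighborsIn_inter_star]
  exact (sum_outerVertices fun c x =>
    cost p W D (fiberCard (π c) I) (neighborsIn (baseGraph S c) (I.image (π c)) x)).symm

theorem subsetExp_exp_outerCost_le (hp : p ∈ Set.Icc 0 1) (hη : 0 ≤ η)
    (hmoment : ∀ c, subsetExp p (I.image (π c))
      (fun N => Real.exp (cost p W D (fiberCard (π c) I) N)) ≤ 1 + η) :
    subsetExp p (outerPairs π I) (fun S => Real.exp (outerCost π I p W D (baseGraph S))) ≤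
      Real.exp (η * (2 * Fintype.card M)) := by
  have hcard : #(outerVertices π I) ≤ 2 * Fintype.card M :=
    (card_le_univ _).trans_eq (by simp)
  simp only [outerCost_baseGraph, Real.exp_sum]
  rw [outerPairs, subsetExp_biUnion_prod _ _ pairwiseDisjoint_star (fun i T =>
    Real.exp (cost p W D (fiberCard (π i.1) I)
      (neighborsIn (baseGraph T i.1) (I.image (π i.1)) i.2)))]
  calc _ ≤ ∏ _i ∈ outerVertices π I, Real.exp η := by
        refine prod_le_prod (fun _ _ => subsetExp_nonneg hp fun _ _ => (Real.exp_pos _).le) ?_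
        intro i hi
        rw [subsetExp_star (mem_filter.1 hi).2 fun N =>
          Real.exp (cost p W D (fiberCard (π i.1) I) N)]
        exact (hmoment i.1).trans ((add_comm 1 η).trans_le (Real.add_one_le_exp η))
    _ = Real.exp (η * #(outerVertices π I)) := by
        rw [prod_const, ← Real.exp_nat_mul, mul_comm]
    _ ≤ _ := by
        gcongr
        exact_mod_cast hcard

variable [Nonempty V] {F t : ℕ}

theorem mul_card_openPairs_le {H : Bool → SimpleGraph M} [∀ c, DecidableRel (H c).Adj]
    (hp : 0 ≤ p) (hz : z ∈ Set.Ioc 0 1) (hF : ∀ c y, fiberCard (π c) I y ≤ F)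
    (hcost : CostBound π I p W D R H) :
    p * (z - 1) * #(openPairs π I H) ≤
      -(p * (1 - z) / 2) * (∑ c, (#(I.image (π c)).offDiag : ℝ)) + p * #I * F + R +
        outerCost π I p W D H := by
  have hcount : ∑ c, (#(I.image (π c)).offDiag : ℝ) ≤
      2 * #(openPairs π I H) + 2 * (#I * F) + outerPairWeight π I H := by
    exact_mod_cast sum_card_offDiag_le hF
  have hpz : 0 ≤ p * (1 - z) := mul_nonneg hp (sub_nonneg.2 hz.2)
  have hpz' : p * (1 - z) ≤ p := mul_le_of_le_one_right hp (by linarith [hz.1])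
  have hloss : p * (1 - z) * (#I * F + outerPairWeight π I H / 2) ≤
      p * (#I * F + outerPairWeight π I H / 2) :=
    mul_le_mul_of_nonneg_right hpz' (by positivity)
  have hmain := mul_le_mul_of_nonneg_left hcount hpz
  unfold CostBound at hcost
  nlinarith

theorem subsetProb_few_open_exposed_le (hp : p ∈ Set.Icc 0 1) (hz : z ∈ Set.Ioc 0 1)
    (hF : ∀ c y, fiberCard (π c) I y ≤ F) {S : Finset (Bool × Sym2 M)} (hS : S ⊆ outerPairs π I) :
    subsetProb p (outerPairs π I)ᶜ (fun T => CostBound π I p W D R (baseGraph (S ∪ T)) ∧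
      #((S ∪ T) ∩ openPairs π I (baseGraph (S ∪ T))) < t) ≤
      z⁻¹ ^ t * Real.exp (-(p * (1 - z) / 2) * (∑ c, (#(I.image (π c)).offDiag : ℝ)) +
        p * #I * F + R + outerCost π I p W D (baseGraph S)) := by
  have hz₀ := hz.1
  have hexposed : ∀ T ⊆ (outerPairs π I)ᶜ, (S ∪ T) ∩ outerPairs π I = S := fun T hT =>
    union_inter_eq_left_of_subset_of_disjoint hS (disjoint_compl_left.mono_left hT)
  by_cases hcost : CostBound π I p W D R (baseGraph S)
  swap
  · rw [subsetProb_eq_zero]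
    · positivity
    · rintro T hT ⟨h, -⟩
      rw [← costBound_inter_outerPairs, hexposed T hT] at h
      exact hcost h
  set O := openPairs π I (baseGraph S)
  have hfew : ∀ T ⊆ (outerPairs π I)ᶜ, CostBound π I p W D R (baseGraph (S ∪ T)) ∧
      #((S ∪ T) ∩ openPairs π I (baseGraph (S ∪ T))) < t → 1 ≤ z⁻¹ ^ t * z ^ #(T ∩ O) := by
    rintro T hT ⟨-, hlt⟩
    rw [← openPairs_inter_outerPairs, hexposed T hT] at hlt
    have hcard : #(T ∩ O) ≤ t :=
      (card_le_card (inter_subset_inter_right subset_union_right)).trans hlt.le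
    rw [inv_pow, inv_mul_eq_div, one_le_div (by positivity)]
    exact pow_le_pow_of_le_one hz₀.le hz.2 hcard
  calc _ ≤ subsetExp p (outerPairs π I)ᶜ fun T => z⁻¹ ^ t * z ^ #(T ∩ O) :=
        subsetProb_le_subsetExp hp (fun _ _ => by positivity) hfew
    _ = z⁻¹ ^ t * (p * z + (1 - p)) ^ #O := by
        rw [subsetExp_mul_left, subsetExp_pow_card_inter, inter_eq_right.2]
        exact subset_compl_iff_disjoint_right.2 (disjoint_openPairs_outerPairs _)
    _ ≤ _ := by
        refine mul_le_mul_of_nonneg_left ?_ (by positivity)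
        exact (mul_add_one_sub_pow_le_exp hp hz₀.le _).trans
          (Real.exp_le_exp.2 (mul_card_openPairs_le hp.1 hz hF hcost))

-- The outer pairs determine the open pairs and are disjoint from them, so the open pairs are still
-- random once the outer pairs are exposed.
theorem subsetProb_few_open_le (hp : p ∈ Set.Icc 0 1) (hz : z ∈ Set.Ioc 0 1)
    (hF : ∀ c y, fiberCard (π c) I y ≤ F) (hη : 0 ≤ η)
    (hmoment : ∀ c, subsetExp p (I.image (π c))
      (fun N => Real.exp (cost p W D (fiberCard (π c) I) N)) ≤ 1 + η) :
    subsetProb p univ (fun S => CostBound π I p W D R (baseGraph S) ∧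
      #(S ∩ openPairs π I (baseGraph S)) < t) ≤
      z⁻¹ ^ t * Real.exp (-(p * (1 - z) / 2) * (∑ c, (#(I.image (π c)).offDiag : ℝ)) +
        p * #I * F + R + η * (2 * Fintype.card M)) := by
  have hz₀ := hz.1
  rw [← union_compl (outerPairs π I), subsetProb_union disjoint_compl_right]
  refine (subsetExp_mono hp fun S hS => subsetProb_few_open_exposed_le hp hz hF hS).trans ?_
  simp only [Real.exp_add _ (outerCost _ _ _ _ _ _), Real.exp_add _ (η * _)]
  rw [subsetExp_mul_left, subsetExp_mul_left]
  gcongr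
  exact subsetExp_exp_outerCost_le hp hη hmoment

end FewOpenPairs

section Moment

variable {M : Type*} {w : M → ℕ} {A N : Finset M} {p W D d k : ℝ} {F : ℕ}

theorem pairWeight_le_two_mul_sq (hw : ∀ y ∈ N, 1 ≤ w y) :
    pairWeight w N ≤ 2 * (∑ y ∈ N, w y) ^ 2 := by
  have hcard : #N ≤ ∑ y ∈ N, w y := by
    simpa using card_nsmul_le_sum N w 1 hw
  calc pairWeight w N ≤ #N ^ 2 + (∑ y ∈ N, w y) ^ 2 := pairWeight_le w N
    _ ≤ 2 * (∑ y ∈ N, w y) ^ 2 := by rw [two_mul]; gcongr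

theorem half_mul_pairWeight_le_mul_sq (hp : 0 ≤ p) (hw : ∀ y ∈ N, 1 ≤ w y) {B : ℝ}
    (hB : ((∑ y ∈ N, w y : ℕ) : ℝ) ≤ B) : p / 2 * pairWeight w N ≤ p * B ^ 2 := by
  have hpair : (pairWeight w N : ℝ) ≤ 2 * ((∑ y ∈ N, w y : ℕ) : ℝ) ^ 2 := by
    exact_mod_cast pairWeight_le_two_mul_sq hw
  calc p / 2 * pairWeight w N ≤ p / 2 * (2 * B ^ 2) := by
        refine mul_le_mul_of_nonneg_left (hpair.trans ?_) (by positivity)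
        gcongr
    _ = p * B ^ 2 := by ring

theorem exp_le_one_add_two_mul {x : ℝ} (hx₀ : 0 ≤ x) (hx₁ : x ≤ 1) : Real.exp x ≤ 1 + 2 * x := by
  have h := (abs_le.1 (Real.abs_exp_sub_one_sub_id_le (abs_le.2 ⟨by linarith, hx₁⟩))).2
  nlinarith

-- The three error terms correspond to `N` having at most `d` elements, more than `d` elements but
-- small total weight, and large total weight.
theorem exp_cost_le (hp : 0 ≤ p) (hF : 0 < F) (hw : ∀ y ∈ N, 1 ≤ w y ∧ w y ≤ F)
    (hd : p * (F * d) ^ 2 ≤ 1) :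
    Real.exp (cost p W D w N) ≤ 1 + p * pairWeight w N +
      Real.exp (p * W ^ 2 - d) * Real.exp 1 ^ #N +
      Real.exp (-(W / F)) * Real.exp (p * D + 1) ^ #N := by
  have hF' : (0 : ℝ) < F := Nat.cast_pos.2 hF
  have hw₁ : ∀ y ∈ N, 1 ≤ w y := fun y hy => (hw y hy).1
  have hsum : ((∑ y ∈ N, w y : ℕ) : ℝ) ≤ #N * F := by
    exact_mod_cast sum_le_card_nsmul N w F fun y hy => (hw y hy).2
  have hpair₀ : 0 ≤ p * pairWeight w N := by positivity
  simp only [← Real.exp_nat_mul, ← Real.exp_add]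
  unfold cost
  split_ifs with hW
  · by_cases hNd : (#N : ℝ) ≤ d
    · have hsmall : p / 2 * pairWeight w N ≤ 1 := by
        refine (half_mul_pairWeight_le_mul_sq hp hw₁ (hsum.trans ?_)).trans hd
        rw [mul_comm]
        gcongr
      have hexp := exp_le_one_add_two_mul (by positivity) hsmall
      linarith [Real.exp_pos (p * W ^ 2 - d + #N * 1), Real.exp_pos (-(W / F) + #N * (p * D + 1))]
    · have hexp : Real.exp (p / 2 * pairWeight w N) ≤ Real.exp (p * W ^ 2 - d + #N * 1) :=
        Real.exp_le_exp.2 (by linarith [half_mul_pairWeight_le_mul_sq hp hw₁ hW])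
      linarith [Real.exp_pos (-(W / F) + #N * (p * D + 1))]
  · have hcard : W / F ≤ #N := (div_le_iff₀ hF').2 (by linarith)
    have hexp : Real.exp (p * D * #N) ≤ Real.exp (-(W / F) + #N * (p * D + 1)) :=
      Real.exp_le_exp.2 (by nlinarith)
    linarith [Real.exp_pos (p * W ^ 2 - d + #N * 1)]

variable [DecidableEq M]

theorem subsetExp_pow_card_le (hp : p ∈ Set.Icc 0 1) {t : ℝ} (ht : 0 ≤ t) (hA : (#A : ℝ) ≤ k) :
    subsetExp p A (fun N => t ^ #N) ≤ Real.exp (p * t * k) := by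
  have hp₀ := hp.1
  calc subsetExp p A (fun N => t ^ #N) = subsetExp p A (fun N => t ^ #(N ∩ A)) :=
        subsetExp_congr fun N hN => by rw [inter_eq_left.2 hN]
    _ = (p * t + (1 - p)) ^ #A := by rw [subsetExp_pow_card_inter, inter_self]
    _ ≤ Real.exp (p * (t - 1) * #A) := mul_add_one_sub_pow_le_exp hp ht _
    _ ≤ Real.exp (p * t * k) := by
        gcongr
        linarith

theorem subsetExp_pairWeight (p : ℝ) (w : M → ℕ) (A : Finset M) :
    subsetExp p A (fun N => (pairWeight w N : ℝ)) = p ^ 2 * pairWeight w A := by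
  have hindicator : ∀ N ⊆ A, (pairWeight w N : ℝ) = ∑ q ∈ A.offDiag,
      ((1 + w q.1 * w q.2 : ℕ) : ℝ) * if {q.1, q.2} ⊆ N then 1 else 0 := by
    intro N hN
    simp only [pairWeight, Nat.cast_sum, mul_ite, mul_one, mul_zero, ← sum_filter]
    refine sum_congr (ext fun q => ?_) fun _ _ => rfl
    simp only [mem_offDiag, mem_filter, insert_subset_iff, singleton_subset_iff]
    exact ⟨fun h => ⟨⟨hN h.1, hN h.2.1, h.2.2⟩, h.1, h.2.1⟩, fun h => ⟨h.2.1, h.2.2, h.1.2.2⟩⟩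
  rw [subsetExp_congr hindicator, subsetExp_sum, pairWeight, Nat.cast_sum, mul_sum]
  refine sum_congr rfl fun q hq => ?_
  obtain ⟨hy, hy', hne⟩ := mem_offDiag.1 hq
  have hprob : subsetExp p A (fun N => if {q.1, q.2} ⊆ N then 1 else 0) = p ^ 2 := by
    rw [← card_pair hne, ← subsetProb_subset (insert_subset hy (singleton_subset_iff.2 hy'))]
    unfold subsetProb
    congr!
  rw [subsetExp_mul_left, hprob, mul_comm]

theorem subsetExp_exp_cost_le (hp : p ∈ Set.Icc 0 1) (hF : 0 < F)
    (hw : ∀ y ∈ A, 1 ≤ w y ∧ w y ≤ F) (hwk : ((∑ y ∈ A, w y : ℕ) : ℝ) ≤ k)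
    (hd : p * (F * d) ^ 2 ≤ 1) :
    subsetExp p A (fun N => Real.exp (cost p W D w N)) ≤ 1 + (2 * p ^ 3 * k ^ 2 +
      Real.exp (p * W ^ 2 - d + p * Real.exp 1 * k) +
      Real.exp (p * Real.exp (p * D + 1) * k - W / F)) := by
  have hp₀ := hp.1
  have hw₁ : ∀ y ∈ A, 1 ≤ w y := fun y hy => (hw y hy).1
  have hA : (#A : ℝ) ≤ k := by
    refine le_trans ?_ hwk
    exact_mod_cast by simpa using card_nsmul_le_sum A w 1 hw₁
  have hpair : p * (p ^ 2 * pairWeight w A) ≤ 2 * p ^ 3 * k ^ 2 := by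
    linarith [mul_le_mul_of_nonneg_left (half_mul_pairWeight_le_mul_sq hp₀ hw₁ hwk)
      (by positivity : 0 ≤ 2 * p ^ 2)]
  calc _ ≤ subsetExp p A (fun N => 1 + p * pairWeight w N +
        Real.exp (p * W ^ 2 - d) * Real.exp 1 ^ #N +
        Real.exp (-(W / F)) * Real.exp (p * D + 1) ^ #N) :=
        subsetExp_mono hp fun N hN => exp_cost_le hp₀ hF (fun y hy => hw y (hN hy)) hd
    _ ≤ 1 + 2 * p ^ 3 * k ^ 2 + Real.exp (p * W ^ 2 - d) * Real.exp (p * Real.exp 1 * k) +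
        Real.exp (-(W / F)) * Real.exp (p * Real.exp (p * D + 1) * k) := by
        simp only [subsetExp_add, subsetExp_const, subsetExp_mul_left, subsetExp_pairWeight]
        gcongr
        · exact subsetExp_pow_card_le hp (Real.exp_pos _).le hA
        · exact subsetExp_pow_card_le hp (Real.exp_pos _).le hA
    _ = _ := by
        rw [← Real.exp_add, ← Real.exp_add, neg_add_eq_sub]
        ring

end Moment

section GoodFewOpenPairs

variable {V M : Type*} [DecidableEq M] {I : Finset V}

theorem one_le_fiberCard {f : V → M} {y : M} (hy : y ∈ I.image f) : 1 ≤ fiberCard f I y := by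
  obtain ⟨u, hu, rfl⟩ := mem_image.1 hy
  exact card_pos.2 ⟨u, mem_filter.2 ⟨hu, rfl⟩⟩

theorem sum_fiberCard_image (f : V → M) (I : Finset V) : ∑ y ∈ I.image f, fiberCard f I y = #I :=
  (card_eq_sum_card_image f I).symm

theorem subsetProb_good_few_open_le [Fintype V] [Nonempty V] [Fintype M] {π : Bool → V → M}
    {p W D d k z : ℝ} {F q s t : ℕ} (hp : p ∈ Set.Icc 0 1) (hz : z ∈ Set.Ioc 0 1)
    (hD : 0 ≤ D) (hF₀ : 0 < F) (hF : ∀ c y, fiberCard (π c) I y ≤ F)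
    (hIk : (#I : ℝ) ≤ k) (hd : p * (F * d) ^ 2 ≤ 1) (hs : k + s * s * (q * F) < s * W) :
    subsetProb p univ (fun S => (∀ c, DegreeLE (π c) D (baseGraph S c)) ∧
      (∀ c, CodegreeLE q (baseGraph S c)) ∧ #(S ∩ openPairs π I (baseGraph S)) < t) ≤
      z⁻¹ ^ t * Real.exp (-(p * (1 - z) / 2) * (∑ c, (#(I.image (π c)).offDiag : ℝ)) +
        p * #I * F + ∑ c, p * D / 2 * ((#I : ℝ) - #(I.image (π c)) + s * s * (q * F)) +
        (2 * p ^ 3 * k ^ 2 + Real.exp (p * W ^ 2 - d + p * Real.exp 1 * k) +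
          Real.exp (p * Real.exp (p * D + 1) * k - W / F)) * (2 * Fintype.card M)) := by
  have hp₀ := hp.1
  have hIk' (c : Bool) : ((∑ y ∈ I.image (π c), fiberCard (π c) I y : ℕ) : ℝ) ≤ k := by
    rwa [sum_fiberCard_image]
  have hmoment (c : Bool) := subsetExp_exp_cost_le (W := W) (D := D) hp hF₀
    (fun y hy => ⟨one_le_fiberCard hy, hF c y⟩) (hIk' c) hd
  refine (subsetProb_mono hp fun S _ hS => ?_).trans
    (subsetProb_few_open_le hp hz hF (by positivity) hmoment)
  exact ⟨costBound_of_degreeLE_of_codegreeLE hp₀ hD hF hS.1 hS.2.1 (by linarith), hS.2.2⟩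

end GoodFewOpenPairs

section Degrees

variable {V M : Type*} [DecidableEq M] {p lam : ℝ} {F : ℕ}

theorem subsetExp_exp_sum_le {A : Finset M} {w : M → ℕ} (hp : p ∈ Set.Icc 0 1) (hlam : 0 ≤ lam)
    (hlamF : lam * F ≤ 1) (hw : ∀ y ∈ A, w y ≤ F) :
    subsetExp p A (fun N => Real.exp (lam * (∑ y ∈ N, w y : ℕ))) ≤
      Real.exp (p * lam * (1 + lam * F) * (∑ y ∈ A, w y : ℕ)) := by
  have hp₀ := hp.1
  have hfactor : ∀ y ∈ A, p * Real.exp (lam * w y) + (1 - p) ≤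
      Real.exp (p * lam * (1 + lam * F) * w y) := by
    intro y hy
    have hnonneg : 0 ≤ lam * w y := by positivity
    have hle : lam * w y ≤ lam * F := by
      gcongr
      exact hw y hy
    have hexp := (abs_le.1 (Real.abs_exp_sub_one_sub_id_le (x := lam * w y)
      (by rw [abs_of_nonneg hnonneg]; linarith))).2
    have hlin : Real.exp (lam * w y) - 1 ≤ lam * (1 + lam * F) * w y := by nlinarith
    linarith [mul_le_mul_of_nonneg_left hlin hp₀,
      Real.add_one_le_exp (p * lam * (1 + lam * F) * w y)]
  simp only [Nat.cast_sum, mul_sum, Real.exp_sum]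
  rw [subsetExp_prod]
  exact prod_le_prod (fun y _ => add_nonneg (by positivity) (sub_nonneg.2 hp.2)) hfactor

variable {S : Finset (Bool × Sym2 M)} {c : Bool}

theorem card_star (c : Bool) (A : Finset M) (x : M) : #(star c A x) = #A :=
  card_image_of_injective _ fun _ _ h => Sym2.congr_right.1 (congrArg Prod.snd h)

theorem disjoint_star {A : Finset M} {x y : M} (hxy : x ≠ y) (hx : x ∉ A) :
    Disjoint (star c A x) (star c A y) := by
  rw [disjoint_left]
  intro e he he'
  obtain ⟨a, -, rfl⟩ := mem_image.1 he
  obtain ⟨b, hb, h⟩ := mem_image.1 he'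
  rcases Sym2.eq_iff.1 (congrArg Prod.snd h) with ⟨hyx, -⟩ | ⟨-, rfl⟩
  · exact hxy hyx.symm
  · exact hx hb

variable [Fintype M]

theorem neighborsIn_univ (S : Finset (Bool × Sym2 M)) (c : Bool) (x : M) :
    neighborsIn (baseGraph S c) univ x =
      neighborsIn (baseGraph (S ∩ star c (univ.erase x) x) c) (univ.erase x) x := by
  rw [neighborsIn_inter_star]
  ext y
  simp only [mem_neighborsIn, mem_univ, mem_erase, true_and, and_true]
  exact ⟨fun h => ⟨h.ne', h⟩, And.right⟩

theorem subsetProb_lt_card_pullbackNeighbors_le [Fintype V] {f : V → M} {D : ℝ}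
    (hp : p ∈ Set.Icc 0 1) (hlam : 0 ≤ lam) (hlamF : lam * F ≤ 1)
    (hF : ∀ y, fiberCard f univ y ≤ F) (c : Bool) (x : M) :
    subsetProb p univ (fun S => D < #(pullbackNeighbors f univ (baseGraph S c) x)) ≤
      Real.exp (p * lam * (1 + lam * F) * Fintype.card V - lam * D) := by
  have hp₀ := hp.1
  let g (N : Finset M) : ℝ := Real.exp (lam * (∑ y ∈ N, fiberCard f univ y : ℕ))
  have hcard (S : Finset (Bool × Sym2 M)) : #(pullbackNeighbors f univ (baseGraph S c) x) =
      ∑ y ∈ neighborsIn (baseGraph S c) univ x, fiberCard f univ y := by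
    simp only [sum_fiberCard, pullbackNeighbors, mem_neighborsIn, mem_univ, true_and]
  calc _ ≤ subsetExp p univ (fun S => Real.exp (-(lam * D)) *
        g (neighborsIn (baseGraph (S ∩ star c (univ.erase x) x) c) (univ.erase x) x)) := by
        refine subsetProb_le_subsetExp hp (fun S _ => by positivity) fun S _ hS => ?_
        rw [hcard, neighborsIn_univ] at hS
        rw [← Real.exp_add]
        exact Real.one_le_exp (by linarith [mul_le_mul_of_nonneg_left hS.le hlam])
    _ = Real.exp (-(lam * D)) * subsetExp p (univ.erase x) g := by
        rw [subsetExp_mul_left, subsetExp_inter_of_subset (subset_univ _) (fun S =>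
          g (neighborsIn (baseGraph S c) (univ.erase x) x)), subsetExp_star (notMem_erase x univ)]
    _ ≤ Real.exp (-(lam * D)) * Real.exp (p * lam * (1 + lam * F) * Fintype.card V) := by
        gcongr
        refine (subsetExp_exp_sum_le hp hlam hlamF fun y _ => hF y).trans ?_
        rw [sum_fiberCard]
        gcongr
        exact card_le_univ _
    _ = _ := by rw [← Real.exp_add, neg_add_eq_sub]

theorem subsetProb_not_degreeLE_le [Fintype V] {π : Bool → V → M} {D : ℝ} (hp : p ∈ Set.Icc 0 1)
    (hlam : 0 ≤ lam) (hlamF : lam * F ≤ 1) (hF : ∀ c y, fiberCard (π c) univ y ≤ F) :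
    subsetProb p univ (fun S => ¬∀ c, DegreeLE (π c) D (baseGraph S c)) ≤ 2 * Fintype.card M *
      Real.exp (p * lam * (1 + lam * F) * Fintype.card V - lam * D) := by
  calc _ ≤ subsetProb p univ (fun S => ∃ i ∈ (univ : Finset (Bool × M)),
        D < #(pullbackNeighbors (π i.1) univ (baseGraph S i.1) i.2)) := by
        refine subsetProb_mono hp fun S _ hS => ?_
        simp only [DegreeLE, not_forall, not_le] at hS
        obtain ⟨c, x, hx⟩ := hS
        exact ⟨(c, x), mem_univ _, hx⟩
    _ ≤ #(univ : Finset (Bool × M)) *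
        Real.exp (p * lam * (1 + lam * F) * Fintype.card V - lam * D) :=
        subsetProb_exists_le hp _ _ fun i _ =>
          subsetProb_lt_card_pullbackNeighbors_le hp hlam hlamF (hF i.1) i.1 i.2
    _ = _ := by simp

theorem subsetProb_subset_common_neighbors_le (hp : p ∈ Set.Icc 0 1) {x y : M} (hxy : x ≠ y)
    (c : Bool) (Y : Finset M) :
    subsetProb p univ (fun S =>
      Y ⊆ neighborsIn (baseGraph S c) univ x ∩ neighborsIn (baseGraph S c) univ y) ≤
      (p ^ 2) ^ #Y := by
  by_cases hY : x ∈ Y ∨ y ∈ Y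
  · rw [subsetProb_eq_zero fun S _ h => ?_]
    · exact pow_nonneg (sq_nonneg p) _
    rcases hY with hx | hy
    · exact (mem_neighborsIn.1 (mem_inter.1 (h hx)).1).2.ne rfl
    · exact (mem_neighborsIn.1 (mem_inter.1 (h hy)).2).2.ne rfl
  have hx : x ∉ Y := fun h => hY (.inl h)
  have hcard : #(star c Y x ∪ star c Y y) = 2 * #Y := by
    rw [card_union_of_disjoint (disjoint_star hxy hx), card_star, card_star, two_mul]
  rw [← pow_mul, ← hcard, ← subsetProb_subset (subset_univ _)]
  refine subsetProb_mono hp fun S _ h e he => ?_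
  rcases mem_union.1 he with he | he <;> obtain ⟨a, ha, rfl⟩ := mem_image.1 he
  · exact (baseGraph_adj.1 (mem_neighborsIn.1 (mem_inter.1 (h ha)).1).2).1
  · exact (baseGraph_adj.1 (mem_neighborsIn.1 (mem_inter.1 (h ha)).2).2).1

theorem subsetProb_not_codegreeLE_le {q : ℕ} (hp : p ∈ Set.Icc 0 1) :
    subsetProb p (univ : Finset (Bool × Sym2 M))
      (fun S => ¬∀ c, CodegreeLE q (baseGraph S c)) ≤
      2 * (Fintype.card M : ℝ) ^ 2 * (Fintype.card M * p ^ 2) ^ (q + 1) := by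
  let T : Finset ((Bool × M × M) × Finset M) :=
    ({i | i.2.1 ≠ i.2.2} : Finset (Bool × M × M)) ×ˢ powersetCard (q + 1) univ
  have hT : (#T : ℝ) ≤ 2 * (Fintype.card M : ℝ) ^ 2 * (Fintype.card M : ℝ) ^ (q + 1) := by
    rw [card_product, card_powersetCard, card_univ]
    have hpairs : #({i | i.2.1 ≠ i.2.2} : Finset (Bool × M × M)) ≤ 2 * Fintype.card M ^ 2 :=
      (card_le_univ _).trans_eq (by simp [sq])
    exact_mod_cast Nat.mul_le_mul hpairs (Nat.choose_le_pow _ _)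
  calc _ ≤ subsetProb p (univ : Finset (Bool × Sym2 M)) (fun S => ∃ i ∈ T, i.2 ⊆
        neighborsIn (baseGraph S i.1.1) univ i.1.2.1 ∩
          neighborsIn (baseGraph S i.1.1) univ i.1.2.2) := by
        refine subsetProb_mono hp fun S _ hS => ?_
        simp only [CodegreeLE, not_forall, not_le] at hS
        obtain ⟨c, x, y, hxy, h⟩ := hS
        obtain ⟨Y, hY, hYcard⟩ := exists_subset_card_eq (Nat.succ_le_of_lt h)
        exact ⟨((c, x, y), Y), by simp [T, hxy, mem_powersetCard, hYcard], hY⟩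
    _ ≤ #T * (p ^ 2) ^ (q + 1) := by
        refine subsetProb_exists_le hp _ _ fun i hi => ?_
        obtain ⟨hne, hY⟩ := mem_product.1 hi
        rw [← (mem_powersetCard.1 hY).2]
        exact subsetProb_subset_common_neighbors_le hp (mem_filter.1 hne).2 _ _
    _ ≤ 2 * (Fintype.card M : ℝ) ^ 2 * (Fintype.card M : ℝ) ^ (q + 1) * (p ^ 2) ^ (q + 1) := by
        gcongr
    _ = _ := by rw [mul_pow, mul_assoc]

end Degrees

section HeavySpots

variable {V M : Type*} [DecidableEq M] {S : Finset (Bool × Sym2 M)} {Δ : ℝ} {s h F : ℕ}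

/-- The graph that `G` induces on `A` has maximum degree at most `Δ`. -/
def InducedDegreeLE (Δ : ℝ) (G : SimpleGraph M) [DecidableRel G.Adj] (A : Finset M) : Prop :=
  ∀ x ∈ A, (#(neighborsIn G A x) : ℝ) ≤ Δ

/-- Some `s` vertices of a projection of a set of size `k` are incident with at least `h` edges
inside this projection. -/
def HeavySpot [Fintype V] (π : Bool → V → M) (k s h : ℕ) (S : Finset (Bool × Sym2 M)) : Prop :=
  ∃ I ∈ powersetCard k (univ : Finset V), ∃ c ∈ (univ : Finset Bool),
    ∃ X ∈ powersetCard s (I.image (π c)), h ≤ #(S ∩ (X ×ˢ I.image (π c)).image (colouredPair c))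

theorem subsetProb_heavySpot_le [Fintype V] [Fintype M] {π : Bool → V → M} {p t : ℝ} {k : ℕ}
    (hp : p ∈ Set.Icc 0 1) (ht : 1 ≤ t) :
    subsetProb p univ (HeavySpot π k s h) ≤ (Fintype.card V : ℝ) ^ k *
      (2 * (2 ^ k * (Real.exp (p * t * (s * k)) / t ^ h))) := by
  set b : ℝ := Real.exp (p * t * (s * k)) / t ^ h
  have hb₀ : 0 ≤ b := by positivity
  calc _ ≤ #(powersetCard k (univ : Finset V)) * (#(univ : Finset Bool) * (2 ^ k * b)) := by
        refine subsetProb_exists_le hp _ _ fun I hI => subsetProb_exists_le hp _ _ fun c _ => ?_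
        have hIc : #(I.image (π c)) ≤ k := card_image_le.trans (mem_powersetCard.1 hI).2.le
        refine (subsetProb_exists_le hp _ _ fun X hX => subsetProb_le_card_inter_le (M := s * k)
          hp ht h ?_).trans (mul_le_mul_of_nonneg_right ?_ hb₀)
        · refine mod_cast card_image_le.trans ?_
          rw [card_product, (mem_powersetCard.1 hX).2]
          gcongr
        · refine mod_cast (card_le_card fun X hX => ?_ :
            #(powersetCard s (I.image (π c))) ≤ #(I.image (π c)).powerset).trans ?_
          · exact mem_powerset.2 (mem_powersetCard.1 hX).1
          · rw [card_powerset]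
            gcongr
            exact one_le_two
    _ ≤ _ := by
        rw [card_powersetCard, card_univ, card_univ, Fintype.card_bool]
        gcongr
        · exact mod_cast Nat.choose_le_pow _ _
        · norm_num

theorem card_lt_of_forall_card_inter_lt {c : Bool} {A : Finset M}
    (hS : ∀ X ∈ powersetCard s A, #(S ∩ (X ×ˢ A).image (colouredPair c)) < h)
    (hΔ : 2 * (h : ℝ) ≤ s * Δ) :
    #{x ∈ A | Δ < #(neighborsIn (baseGraph S c) A x)} < s := by
  by_contra! hs
  obtain ⟨X, hX, hXs⟩ := exists_subset_card_eq hs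
  let P : Finset (M × M) := {q ∈ X ×ˢ A | (baseGraph S c).Adj q.1 q.2}
  have hPS : P.image (colouredPair c) ⊆ S ∩ (X ×ˢ A).image (colouredPair c) := by
    intro e he
    obtain ⟨q, hq, rfl⟩ := mem_image.1 he
    obtain ⟨hqX, hadj⟩ := mem_filter.1 hq
    exact mem_inter.2 ⟨(baseGraph_adj.1 hadj).1, mem_image_of_mem _ hqX⟩
  have hP : #P = ∑ x ∈ X, #(neighborsIn (baseGraph S c) A x) := by
    simp only [P, neighborsIn, card_filter, sum_product]
  have hlow : (s : ℝ) * Δ ≤ #P := by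
    rw [hP, ← hXs, ← nsmul_eq_mul, Nat.cast_sum]
    exact card_nsmul_le_sum _ _ _ fun x hx => (mem_filter.1 (hX hx)).2.le
  have hhP : 2 * h ≤ #P := mod_cast hΔ.trans hlow
  have hPimage := card_le_two_mul_card_image_colouredPair c P
  have himage := card_le_card hPS
  have hlt := hS X (mem_powersetCard.2 ⟨hX.trans (filter_subset _ _), hXs⟩)
  lia

theorem exists_inducedDegreeLE_subset [Fintype V] {π : Bool → V → M} {I : Finset V} {k κ : ℕ}
    (hF : ∀ c y, fiberCard (π c) I y ≤ F) (hS : ¬HeavySpot π k s h S)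
    (hΔ : 2 * (h : ℝ) ≤ s * Δ) (hκ : κ + 2 * (s * F) ≤ k) (hI : #I = k) :
    ∃ J ⊆ I, #J = κ ∧ ∀ c, InducedDegreeLE Δ (baseGraph S c) (J.image (π c)) := by
  classical
  let X (c : Bool) : Finset M :=
    {x ∈ I.image (π c) | Δ < #(neighborsIn (baseGraph S c) (I.image (π c)) x)}
  let removed : Finset V := univ.biUnion fun c => {u ∈ I | π c u ∈ X c}
  have hX (c : Bool) : #(X c) < s := by
    refine card_lt_of_forall_card_inter_lt (fun Y hY => ?_) hΔ
    by_contra! hle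
    exact hS ⟨I, mem_powersetCard.2 ⟨subset_univ I, hI⟩, c, mem_univ c, Y, hY, hle⟩
  have hremoved : #removed ≤ 2 * (s * F) := by
    refine (card_biUnion_le_card_mul _ _ (s * F) fun c _ => ?_).trans_eq (by simp)
    exact (card_filter_apply_mem_le (hF c) (X c)).trans (Nat.mul_le_mul_right F (hX c).le)
  obtain ⟨J, hJ, hJκ⟩ := exists_subset_card_eq (s := I \ removed) (n := κ) (by
    have := le_card_sdiff removed I
    lia)
  have hJI : J ⊆ I := hJ.trans sdiff_subset
  refine ⟨J, hJI, hJκ, fun c x hx => ?_⟩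
  obtain ⟨u, hu, rfl⟩ := mem_image.1 hx
  have huX : π c u ∉ X c := fun h => (mem_sdiff.1 (hJ hu)).2
    (mem_biUnion.2 ⟨c, mem_univ c, mem_filter.2 ⟨hJI hu, h⟩⟩)
  have hle := not_lt.1 fun h => huX (mem_filter.2 ⟨mem_image_of_mem _ (hJI hu), h⟩)
  exact (Nat.cast_le.2 (card_le_card
    (filter_subset_filter _ (image_subset_image hJI)))).trans hle

end HeavySpots

section Separation

variable {α ι : Type*} [DecidableEq α]

theorem subsetProb_mem_notMem_notMem {p : ℝ} {A : Finset α} {x y y' : α} (hx : x ∈ A) (hy : y ∈ A)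
    (hy' : y' ∈ A) (hxy : x ≠ y) (hxy' : x ≠ y') (hyy' : y ≠ y') :
    subsetProb p A (fun K => x ∈ K ∧ y ∉ K ∧ y' ∉ K) = p * (1 - p) ^ 2 := by
  have hT : insert x (insert y (insert y' ∅)) ⊆ A := by simp [insert_subset_iff, hx, hy, hy']
  rw [subsetProb_congr (Q := fun K => x ∈ K ∩ insert x (insert y (insert y' ∅)) ∧
      y ∉ K ∩ insert x (insert y (insert y' ∅)) ∧ y' ∉ K ∩ insert x (insert y (insert y' ∅)))
      fun K _ => by simp,
    subsetProb_inter_of_subset hT fun K => x ∈ K ∧ y ∉ K ∧ y' ∉ K, subsetProb]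
  simp only [subsetExp_insert (E := insert y (insert y' ∅)) (a := x) (by simp [hxy, hxy']),
    subsetExp_insert (E := insert y' ∅) (a := y) (by simpa using hyy'),
    subsetExp_insert (notMem_empty y'), subsetExp_empty]
  simp [hxy, hxy', hyy', hxy.symm, hxy'.symm, hyy'.symm, sq]

theorem exists_mul_card_le_card_filter {p b : ℝ} (hp : p ∈ Set.Icc 0 1) {A : Finset α}
    {J : Finset ι} {Q : ι → Finset α → Prop} [∀ e K, Decidable (Q e K)]
    (hQ : ∀ e ∈ J, b ≤ subsetProb p A (Q e)) : ∃ K ⊆ A, b * #J ≤ #{e ∈ J | Q e K} := by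
  have hmean : subsetExp p A (fun K => (#{e ∈ J | Q e K} : ℝ)) = ∑ e ∈ J, subsetProb p A (Q e) := by
    simp only [card_filter, Nat.cast_sum, Nat.cast_ite, Nat.cast_one, Nat.cast_zero]
    rw [subsetExp_sum]
    refine sum_congr rfl fun e _ => ?_
    unfold subsetProb
    congr!
  obtain ⟨K, hK, hmax⟩ := A.powerset.exists_max_image (fun K => #{e ∈ J | Q e K})
    (powerset_nonempty A)
  refine ⟨K, mem_powerset.1 hK, ?_⟩
  calc b * #J ≤ ∑ e ∈ J, subsetProb p A (Q e) := by
        rw [mul_comm, ← nsmul_eq_mul]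
        exact card_nsmul_le_sum J _ b hQ
    _ = subsetExp p A (fun K => (#{e ∈ J | Q e K} : ℝ)) := hmean.symm
    _ ≤ #{e ∈ J | Q e K} :=
        subsetExp_le_of_forall_le hp fun K' hK' => mod_cast hmax K' (mem_powerset.2 hK')

theorem exists_separating_subset {A : Finset α} {J : Finset ι} {R : ι → α → α → α → Prop}
    [∀ e x y y', Decidable (R e x y y')]
    (hJ : ∀ e ∈ J, ∃ x ∈ A, ∃ y ∈ A, ∃ y' ∈ A, x ≠ y ∧ x ≠ y' ∧ y ≠ y' ∧ R e x y y') :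
    ∃ K ⊆ A, #J ≤ 8 * #{e ∈ J | ∃ x ∈ K, ∃ y ∈ A \ K, ∃ y' ∈ A \ K, R e x y y'} := by
  classical
  obtain ⟨K, hK, hcard⟩ := exists_mul_card_le_card_filter (p := 1 / 2) (b := 1 / 8) (A := A)
    (J := J) (Q := fun e K => ∃ x ∈ K, ∃ y ∈ A \ K, ∃ y' ∈ A \ K, R e x y y') (by norm_num)
    fun e he => by
      obtain ⟨x, hx, y, hy, y', hy', hxy, hxy', hyy', hR⟩ := hJ e he
      calc (1 / 8 : ℝ) = subsetProb (1 / 2) A (fun K => x ∈ K ∧ y ∉ K ∧ y' ∉ K) := by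
            rw [subsetProb_mem_notMem_notMem hx hy hy' hxy hxy' hyy']
            norm_num
        _ ≤ _ := subsetProb_mono (by norm_num) fun K _ hsep => ⟨x, hsep.1, y,
            mem_sdiff.2 ⟨hy, hsep.2.1⟩, y', mem_sdiff.2 ⟨hy', hsep.2.2⟩, hR⟩
  refine ⟨K, hK, ?_⟩
  have hcast : (#J : ℝ) ≤ 8 * #{e ∈ J | ∃ x ∈ K, ∃ y ∈ A \ K, ∃ y' ∈ A \ K, R e x y y'} := by
    linarith
  exact_mod_cast hcast

end Separation

section InnerPairs

variable {V M : Type*} [DecidableEq M] {π : Bool → V → M} {I : Finset V} {c c' : Bool}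
  {p Δ t : ℝ} {F i : ℕ}

theorem card_innerPairs_le [Nonempty V] {H : Bool → SimpleGraph M} [∀ c, DecidableRel (H c).Adj]
    (hF : ∀ y, fiberCard (π c') I y ≤ F) (hΔ : InducedDegreeLE Δ (H c') (I.image (π c'))) :
    (#(innerPairs π I H c c') : ℝ) ≤ #I * (F * Δ) ^ 2 := by
  have hclosed : ∀ x ∈ I.image (π c'), (#(closedPairs π I H c c' x) : ℝ) ≤ (F * Δ) ^ 2 := by
    intro x hx
    set N := neighborsIn (H c') (I.image (π c')) x
    have hN : #(closedPairs π I H c c' x) ≤ (F * #N) ^ 2 := by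
      calc _ ≤ ∑ q ∈ N.offDiag, fiberCard (π c') I q.1 * fiberCard (π c') I q.2 :=
            card_closedPairs_le c c' x
        _ ≤ #N.offDiag * (F * F) :=
            sum_le_card_nsmul _ _ _ fun q _ => Nat.mul_le_mul (hF _) (hF _)
        _ ≤ #N * #N * (F * F) := by
            rw [offDiag_card]
            exact Nat.mul_le_mul_right _ (Nat.sub_le _ _)
        _ = (F * #N) ^ 2 := by ring
    calc _ ≤ ((F : ℝ) * #N) ^ 2 := mod_cast hN
      _ ≤ (F * Δ) ^ 2 := by
          gcongr
          exact hΔ x hx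
  calc (#(innerPairs π I H c c') : ℝ) ≤ ∑ x ∈ I.image (π c'), (#(closedPairs π I H c c' x) : ℝ) :=
        mod_cast card_image_le.trans card_biUnion_le
    _ ≤ #(I.image (π c')) * (F * Δ) ^ 2 := by
        rw [← nsmul_eq_mul]
        exact sum_le_card_nsmul _ _ _ hclosed
    _ ≤ #I * (F * Δ) ^ 2 := by
        gcongr
        exact card_image_le

theorem subsetProb_many_innerPairs_of_ne_le [Fintype M] [Nonempty V]
    (hF : ∀ y, fiberCard (π c') I y ≤ F) (hp : p ∈ Set.Icc 0 1) (ht : 1 ≤ t) (hc : c ≠ c') :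
    subsetProb p univ (fun S => InducedDegreeLE Δ (baseGraph S c') (I.image (π c')) ∧
      i ≤ #(S ∩ innerPairs π I (baseGraph S) c c')) ≤
      Real.exp (p * t * (#I * (F * Δ) ^ 2)) / t ^ i := by
  refine (subsetProb_mono hp fun S _ hS => ⟨card_innerPairs_le hF hS.1, hS.2⟩).trans <|
    subsetProb_le_card_inter_exposed_le
      (subset_univ ({e | e.1 = c'} : Finset (Bool × Sym2 M))) hp ht i (fun S => ?_) fun S => ?_
  · refine congrArg (image _) (biUnion_congr rfl fun x _ => ?_)
    simp only [closedPairs, baseGraph_adj, mem_inter, mem_filter, mem_univ, and_true]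
  · rw [disjoint_left]
    intro e he
    obtain ⟨q, -, rfl⟩ := mem_image.1 he
    simpa [colouredPair] using hc

/-- The coloured pairs of elements of `A` outside `K` that have a common neighbour in `K`. -/
def splitPairs (c : Bool) (G : SimpleGraph M) [DecidableRel G.Adj] (A K : Finset M) :
    Finset (Bool × Sym2 M) :=
  (K.biUnion fun x => (neighborsIn G (A \ K) x).offDiag).image (colouredPair c)

theorem card_splitPairs_le {G : SimpleGraph M} [DecidableRel G.Adj] {A K : Finset M} (hK : K ⊆ A)
    (hΔ : InducedDegreeLE Δ G A) : (#(splitPairs c G A K) : ℝ) ≤ #A * Δ ^ 2 := by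
  have hx : ∀ x ∈ K, (#(neighborsIn G (A \ K) x).offDiag : ℝ) ≤ Δ ^ 2 := by
    intro x hx
    have hle : #(neighborsIn G (A \ K) x).offDiag ≤ #(neighborsIn G A x) ^ 2 := by
      rw [offDiag_card, ← sq]
      refine (Nat.sub_le _ _).trans (Nat.pow_le_pow_left (card_le_card ?_) 2)
      exact filter_subset_filter _ sdiff_subset
    calc _ ≤ (#(neighborsIn G A x) : ℝ) ^ 2 := mod_cast hle
      _ ≤ Δ ^ 2 := by
          gcongr
          exact hΔ x (hK hx)
  calc (#(splitPairs c G A K) : ℝ) ≤ ∑ x ∈ K, (#(neighborsIn G (A \ K) x).offDiag : ℝ) :=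
        mod_cast card_image_le.trans card_biUnion_le
    _ ≤ #K * Δ ^ 2 := by
        rw [← nsmul_eq_mul]
        exact sum_le_card_nsmul _ _ _ hx
    _ ≤ #A * Δ ^ 2 := by gcongr

theorem splitPairs_inter_stars (S : Finset (Bool × Sym2 M)) (c : Bool) (A K : Finset M) :
    splitPairs c (baseGraph (S ∩ K.biUnion (star c (A \ K))) c) A K =
      splitPairs c (baseGraph S c) A K := by
  refine congrArg (image _) (biUnion_congr rfl fun x hx => congrArg offDiag ?_)
  refine filter_congr fun y hy => ?_
  have hmem : (c, s(x, y)) ∈ K.biUnion (star c (A \ K)) :=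
    mem_biUnion.2 ⟨x, hx, mem_image_of_mem _ hy⟩
  simp only [baseGraph_adj, mem_inter, hmem, and_true]

theorem disjoint_splitPairs_stars (c : Bool) (G : SimpleGraph M) [DecidableRel G.Adj]
    (A K : Finset M) : Disjoint (splitPairs c G A K) (K.biUnion (star c (A \ K))) := by
  rw [disjoint_left]
  intro e he he'
  obtain ⟨⟨y, y'⟩, hq, rfl⟩ := mem_image.1 he
  obtain ⟨x, -, hq⟩ := mem_biUnion.1 hq
  obtain ⟨hy, hy', -⟩ := mem_offDiag.1 hq
  obtain ⟨z, hz, he'⟩ := mem_biUnion.1 he'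
  obtain ⟨a, -, h⟩ := mem_image.1 he'
  rcases Sym2.eq_iff.1 (congrArg Prod.snd h) with ⟨rfl, -⟩ | ⟨rfl, -⟩
  · exact (mem_sdiff.1 (mem_neighborsIn.1 hy).1).2 hz
  · exact (mem_sdiff.1 (mem_neighborsIn.1 hy').1).2 hz

theorem subsetProb_many_splitPairs_le [Fintype M] {A K : Finset M} (hK : K ⊆ A)
    (hp : p ∈ Set.Icc 0 1) (ht : 1 ≤ t) :
    subsetProb p univ (fun S => InducedDegreeLE Δ (baseGraph S c) A ∧
      i ≤ #(S ∩ splitPairs c (baseGraph S c) A K)) ≤ Real.exp (p * t * (#A * Δ ^ 2)) / t ^ i :=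
  (subsetProb_mono hp fun _ _ hS => ⟨card_splitPairs_le hK hS.1, hS.2⟩).trans <|
    subsetProb_le_card_inter_exposed_le (subset_univ _) hp ht i
      (fun S => splitPairs_inter_stars S c A K) fun S =>
        disjoint_splitPairs_stars c (baseGraph S c) A K

variable [Nonempty V]

theorem mem_innerPairs_self {H : Bool → SimpleGraph M} [∀ c, DecidableRel (H c).Adj]
    {e : Bool × Sym2 M} : e ∈ innerPairs π I H c c ↔ ∃ x ∈ I.image (π c), ∃ y ∈ I.image (π c),
      ∃ y' ∈ I.image (π c), y ≠ y' ∧ (H c).Adj x y ∧ (H c).Adj x y' ∧ (c, s(y, y')) = e := by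
  simp only [innerPairs, mem_image (f := colouredPair c), mem_biUnion, closedPairs, mem_filter]
  constructor
  · rintro ⟨⟨y, y'⟩, ⟨x, hx, hq, hne, hadj, hadj'⟩, rfl⟩
    obtain ⟨hy, hy', -⟩ := mem_offDiag.1 hq
    rw [transfer_self hy] at hne hadj
    rw [transfer_self hy'] at hne hadj'
    exact ⟨x, hx, y, hy, y', hy', hne, hadj.symm, hadj'.symm, rfl⟩
  · rintro ⟨x, hx, y, hy, y', hy', hne, hadj, hadj', rfl⟩
    refine ⟨(y, y'), ⟨x, hx, mem_offDiag.2 ⟨hy, hy', hne⟩, ?_⟩, rfl⟩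
    rw [transfer_self hy, transfer_self hy']
    exact ⟨hne, hadj.symm, hadj'.symm⟩

theorem exists_splitPairs {S : Finset (Bool × Sym2 M)}
    (hS : 8 * i ≤ #(S ∩ innerPairs π I (baseGraph S) c c)) :
    ∃ K ⊆ I.image (π c), i ≤ #(S ∩ splitPairs c (baseGraph S c) (I.image (π c)) K) := by
  classical
  obtain ⟨K, hK, hcard⟩ := exists_separating_subset (A := I.image (π c))
    (J := S ∩ innerPairs π I (baseGraph S) c c) (R := fun e x y y' => y ≠ y' ∧
      (baseGraph S c).Adj x y ∧ (baseGraph S c).Adj x y' ∧ (c, s(y, y')) = e) fun e he => by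
      obtain ⟨x, hx, y, hy, y', hy', hR⟩ := mem_innerPairs_self.1 (mem_inter.1 he).2
      exact ⟨x, hx, y, hy, y', hy', hR.2.1.ne, hR.2.2.1.ne, hR.1, hR⟩
  refine ⟨K, hK, Nat.le_of_mul_le_mul_left
    ((hS.trans hcard).trans (Nat.mul_le_mul_left 8 (card_le_card fun e he => ?_))) (by simp)⟩
  obtain ⟨he, x, hx, y, hy, y', hy', hne, hadj, hadj', rfl⟩ := mem_filter.1 he
  refine mem_inter.2 ⟨(mem_inter.1 he).1, mem_image.2 ⟨(y, y'), mem_biUnion.2 ⟨x, hx, ?_⟩, rfl⟩⟩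
  exact mem_offDiag.2 ⟨mem_neighborsIn.2 ⟨hy, hadj⟩, mem_neighborsIn.2 ⟨hy', hadj'⟩, hne⟩

variable [Fintype M]

theorem subsetProb_many_innerPairs_self_le (hp : p ∈ Set.Icc 0 1) (ht : 1 ≤ t) (c : Bool) :
    subsetProb p univ (fun S => InducedDegreeLE Δ (baseGraph S c) (I.image (π c)) ∧
      8 * i ≤ #(S ∩ innerPairs π I (baseGraph S) c c)) ≤
      2 ^ #I * (Real.exp (p * t * (#I * Δ ^ 2)) / t ^ i) := by
  have hp₀ := hp.1
  have hA : #(I.image (π c)) ≤ #I := card_image_le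
  calc _ ≤ subsetProb p univ (fun S => ∃ K ∈ (I.image (π c)).powerset,
        InducedDegreeLE Δ (baseGraph S c) (I.image (π c)) ∧
          i ≤ #(S ∩ splitPairs c (baseGraph S c) (I.image (π c)) K)) := by
        refine subsetProb_mono hp fun S _ hS => ?_
        obtain ⟨K, hK, h⟩ := exists_splitPairs hS.2
        exact ⟨K, mem_powerset.2 hK, hS.1, h⟩
    _ ≤ #(I.image (π c)).powerset * (Real.exp (p * t * (#(I.image (π c)) * Δ ^ 2)) / t ^ i) :=
        subsetProb_exists_le hp _ _ fun K hK =>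
          subsetProb_many_splitPairs_le (mem_powerset.1 hK) hp ht
    _ ≤ 2 ^ #I * (Real.exp (p * t * (#I * Δ ^ 2)) / t ^ i) := by
        rw [card_powerset]
        push_cast
        gcongr
        exact one_le_two

theorem subsetProb_many_innerPairs_le (hF₀ : 0 < F) (hF : ∀ c y, fiberCard (π c) I y ≤ F)
    (hp : p ∈ Set.Icc 0 1) (ht : 1 ≤ t) (hΔ : 0 ≤ Δ) :
    subsetProb p univ (fun S => ∃ j ∈ (univ : Finset (Bool × Bool)),
      (∀ c, InducedDegreeLE Δ (baseGraph S c) (I.image (π c))) ∧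
        8 * i ≤ #(S ∩ innerPairs π I (baseGraph S) j.1 j.2)) ≤
      4 * (2 ^ #I * (Real.exp (p * t * (#I * (F * Δ) ^ 2)) / t ^ i)) := by
  have hp₀ := hp.1
  refine (subsetProb_exists_le (b := 2 ^ #I * (Real.exp (p * t * (#I * (F * Δ) ^ 2)) / t ^ i)) hp
    _ _ fun j _ => ?_).trans_eq (by norm_num)
  obtain ⟨c, c'⟩ := j
  rcases eq_or_ne c c' with rfl | hc
  · refine (subsetProb_mono hp fun S _ hS => ⟨hS.1 c, hS.2⟩).trans
      ((subsetProb_many_innerPairs_self_le hp ht c).trans ?_)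
    have hΔF : Δ ≤ F * Δ := le_mul_of_one_le_left hΔ (mod_cast hF₀)
    gcongr
  · refine (subsetProb_mono (Q := fun S => InducedDegreeLE Δ (baseGraph S c') (I.image (π c')) ∧
      i ≤ #(S ∩ innerPairs π I (baseGraph S) c c')) hp fun S _ hS => ⟨hS.1 c', ?_⟩).trans
      ((subsetProb_many_innerPairs_of_ne_le (hF c') hp ht hc).trans ?_)
    · exact (Nat.le_mul_of_pos_left i (by simp)).trans hS.2
    · exact le_mul_of_one_le_left (by positivity) (one_le_pow₀ one_le_two)

end InnerPairs

section RandomMaps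

variable {V M : Type*} [Fintype V] [Fintype M]

theorem card_filter_exists_apply_le {α : Type*} [Fintype α] (Q : α → Prop) [DecidablePred Q] :
    #{π : Bool → α | ∃ c, Q (π c)} ≤ 2 * (#{a | Q a} * Fintype.card α) := by
  classical
  have hsub : ({π : Bool → α | ∃ c, Q (π c)} : Finset (Bool → α)) ⊆
      univ.biUnion fun c => Fintype.piFinset fun c' =>
        if c' = c then ({a | Q a} : Finset α) else univ := by
    intro π hπ
    obtain ⟨c, hc⟩ := (mem_filter.1 hπ).2
    refine mem_biUnion.2 ⟨c, mem_univ _, Fintype.mem_piFinset.2 fun c' => ?_⟩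
    split_ifs with h
    · exact mem_filter.2 ⟨mem_univ _, h ▸ hc⟩
    · exact mem_univ _
  refine ((card_le_card hsub).trans card_biUnion_le).trans_eq ?_
  simp only [Fintype.card_piFinset, Fintype.sum_bool, Fintype.prod_bool, if_true,
    Bool.false_eq_true, if_false, Bool.true_eq_false, card_univ]
  ring

variable [DecidableEq M] [Nonempty M]

section

variable [DecidableEq V]

theorem card_filter_forall_mem (I : Finset V) (R : Finset M) :
    (#{g : V → M | ∀ v ∈ I, g v ∈ R} : ℝ) =
      (#R / Fintype.card M : ℝ) ^ #I * Fintype.card (V → M) := by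
  have hm : (Fintype.card M : ℝ) ≠ 0 := mod_cast Fintype.card_ne_zero
  have hpi : ({g | ∀ v ∈ I, g v ∈ R} : Finset (V → M)) =
      Fintype.piFinset fun v => if v ∈ I then R else univ := by
    ext g
    simp only [mem_filter, mem_univ, true_and, Fintype.mem_piFinset]
    refine forall_congr' fun v => ?_
    by_cases hv : v ∈ I <;> simp [hv]
  have hcompl : ({v | v ∉ I} : Finset V) = Iᶜ := by
    ext v
    simp
  rw [hpi, Fintype.card_piFinset]
  simp only [apply_ite card, prod_ite, prod_const, filter_univ_mem, hcompl, card_univ,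
    Fintype.card_fun]
  push_cast
  rw [← card_add_card_compl I, pow_add, div_pow, ← mul_assoc,
    div_mul_cancel₀ _ (pow_ne_zero _ hm)]

theorem card_filter_card_image_eq_le (I : Finset V) (r : ℕ) :
    (#{g : V → M | #(I.image g) = r} : ℝ) ≤
      (Fintype.card M).choose r * (r / Fintype.card M : ℝ) ^ #I * Fintype.card (V → M) := by
  have hsub : ({g | #(I.image g) = r} : Finset (V → M)) ⊆
      (powersetCard r (univ : Finset M)).biUnion fun R => {g | ∀ v ∈ I, g v ∈ R} :=
    fun g hg => mem_biUnion.2 ⟨I.image g, mem_powersetCard.2 ⟨subset_univ _, (mem_filter.1 hg).2⟩,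
      mem_filter.2 ⟨mem_univ _, fun v hv => mem_image_of_mem _ hv⟩⟩
  calc (#{g : V → M | #(I.image g) = r} : ℝ) ≤
        ∑ R ∈ powersetCard r (univ : Finset M), (#{g : V → M | ∀ v ∈ I, g v ∈ R} : ℝ) :=
        mod_cast (card_le_card hsub).trans card_biUnion_le
    _ = ∑ _R ∈ powersetCard r (univ : Finset M),
          (r / Fintype.card M : ℝ) ^ #I * Fintype.card (V → M) :=
        sum_congr rfl fun _ hR => by rw [card_filter_forall_mem, (mem_powersetCard.1 hR).2]
    _ = _ := by rw [sum_const, card_powersetCard, card_univ, nsmul_eq_mul, mul_assoc]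

theorem sum_card_image_le (I : Finset V) {Φ : ℕ → ℝ} (hΦ : ∀ r, 0 ≤ Φ r) {B : ℝ}
    (hB : ∀ r ≤ #I, (Fintype.card M).choose r * (r / Fintype.card M : ℝ) ^ #I * Φ r ≤ B) :
    ∑ g : V → M, Φ #(I.image g) ≤ (#I + 1) * B * Fintype.card (V → M) := by
  calc ∑ g : V → M, Φ #(I.image g) =
        ∑ r ∈ range (#I + 1), (#{g : V → M | #(I.image g) = r} : ℝ) * Φ r := by
        rw [← sum_fiberwise_of_maps_to
          (fun g _ => mem_range.2 (Nat.lt_succ_of_le (card_image_le (s := I) (f := g))))]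
        refine sum_congr rfl fun r _ => ?_
        rw [sum_congr rfl fun _ hg => congrArg Φ (mem_filter.1 hg).2, sum_const, nsmul_eq_mul]
    _ ≤ ∑ r ∈ range (#I + 1), (Fintype.card M).choose r * (r / Fintype.card M : ℝ) ^ #I *
          Fintype.card (V → M) * Φ r :=
        sum_le_sum fun r _ =>
          mul_le_mul_of_nonneg_right (card_filter_card_image_eq_le I r) (hΦ r)
    _ ≤ ∑ _r ∈ range (#I + 1), B * Fintype.card (V → M) := by
        refine sum_le_sum fun r hr => ?_
        rw [mul_right_comm]
        exact mul_le_mul_of_nonneg_right (hB r (Nat.lt_succ_iff.1 (mem_range.1 hr)))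
          (Nat.cast_nonneg _)
    _ = _ := by
        rw [sum_const, card_range, nsmul_eq_mul, Nat.cast_add_one, mul_assoc]

theorem sum_prod_card_image_le (I : Finset V) {Φ : ℕ → ℝ} (hΦ : ∀ r, 0 ≤ Φ r) {B : ℝ}
    (hB : ∀ r ≤ #I, (Fintype.card M).choose r * (r / Fintype.card M : ℝ) ^ #I * Φ r ≤ B) :
    ∑ π : Bool → V → M, ∏ c, Φ #(I.image (π c)) ≤
      ((#I + 1) * B) ^ 2 * (Fintype.card (V → M) : ℝ) ^ 2 := by
  have hprod : ∑ π : Bool → V → M, ∏ c, Φ #(I.image (π c)) =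
      ∏ _c : Bool, ∑ g : V → M, Φ #(I.image g) := by
    rw [prod_univ_sum, Fintype.piFinset_univ]
  rw [hprod, prod_const, card_univ, Fintype.card_bool, ← mul_pow]
  exact pow_le_pow_left₀ (sum_nonneg fun g _ => hΦ _) (sum_card_image_le I hΦ hB) 2

theorem card_filter_lt_fiberCard_le (F : ℕ) :
    (#{g : V → M | ∃ y, F < fiberCard g univ y} : ℝ) ≤
      Fintype.card M * ((Fintype.card V).choose (F + 1) * (1 / Fintype.card M : ℝ) ^ (F + 1)) *
        Fintype.card (V → M) := by
  let T : Finset (M × Finset V) := univ ×ˢ powersetCard (F + 1) univ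
  have hsub : ({g | ∃ y, F < fiberCard g univ y} : Finset (V → M)) ⊆
      T.biUnion fun i => {g | ∀ v ∈ i.2, g v ∈ ({i.1} : Finset M)} := by
    intro g hg
    obtain ⟨y, hy⟩ := (mem_filter.1 hg).2
    obtain ⟨X, hX, hcard⟩ := exists_subset_card_eq (Nat.succ_le_of_lt hy)
    exact mem_biUnion.2 ⟨(y, X), mem_product.2 ⟨mem_univ _, mem_powersetCard.2
      ⟨subset_univ _, hcard⟩⟩, mem_filter.2
        ⟨mem_univ _, fun v hv => mem_singleton.2 (mem_filter.1 (hX hv)).2⟩⟩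
  calc (#{g : V → M | ∃ y, F < fiberCard g univ y} : ℝ) ≤
        ∑ i ∈ T, (#{g : V → M | ∀ v ∈ i.2, g v ∈ ({i.1} : Finset M)} : ℝ) :=
        mod_cast (card_le_card hsub).trans card_biUnion_le
    _ = ∑ _i ∈ T, (1 / Fintype.card M : ℝ) ^ (F + 1) * Fintype.card (V → M) :=
        sum_congr rfl fun _ hi => by
          rw [card_filter_forall_mem, card_singleton, Nat.cast_one,
            (mem_powersetCard.1 (mem_product.1 hi).2).2]
    _ = _ := by
        rw [sum_const, card_product, card_powersetCard, card_univ, card_univ, nsmul_eq_mul]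
        push_cast
        ring

theorem card_filter_exists_lt_fiberCard_le (F : ℕ) :
    (#{π : Bool → V → M | ∃ c y, F < fiberCard (π c) univ y} : ℝ) ≤ 2 * (Fintype.card M *
      ((Fintype.card V).choose (F + 1) * (1 / Fintype.card M : ℝ) ^ (F + 1))) *
        (Fintype.card (V → M) : ℝ) ^ 2 := by
  calc (#{π : Bool → V → M | ∃ c y, F < fiberCard (π c) univ y} : ℝ) ≤
        2 * (#{g : V → M | ∃ y, F < fiberCard g univ y} * Fintype.card (V → M)) :=
        mod_cast card_filter_exists_apply_le fun g : V → M => ∃ y, F < fiberCard g univ y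
    _ ≤ 2 * (Fintype.card M * ((Fintype.card V).choose (F + 1) *
          (1 / Fintype.card M : ℝ) ^ (F + 1)) * Fintype.card (V → M) * Fintype.card (V → M)) := by
        gcongr
        exact card_filter_lt_fiberCard_le F
    _ = _ := by ring

end

-- Under the uniform distribution of `π` some fibre is large with probability at most `1 / 2`, and
-- the expectation of the sum is at most `A`.
theorem exists_fiberCard_le_and_sum_prod_le {Φ : ℕ → ℝ} (hΦ : ∀ r, 0 ≤ Φ r) {A B : ℝ} {κ F : ℕ}
    (hB : ∀ r ≤ κ, (Fintype.card M).choose r * (r / Fintype.card M : ℝ) ^ κ * Φ r ≤ B)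
    (hA : 0 < A) (hAB : (Fintype.card V).choose κ * ((κ + 1) * B) ^ 2 ≤ A)
    (hF : 2 * (Fintype.card M *
      ((Fintype.card V).choose (F + 1) * (1 / Fintype.card M : ℝ) ^ (F + 1))) < 1 / 2) :
    ∃ π : Bool → V → M, (∀ c y, fiberCard (π c) univ y ≤ F) ∧
      ∑ I ∈ powersetCard κ univ, ∏ c, Φ #(I.image (π c)) ≤ 2 * A := by
  classical
  set X : (Bool → V → M) → ℝ := fun π => ∑ I ∈ powersetCard κ univ, ∏ c, Φ #(I.image (π c))
  set N : ℝ := (Fintype.card (V → M) : ℝ)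
  have hN : 0 < N := Nat.cast_pos.2 Fintype.card_pos
  have hX₀ (π) : 0 ≤ X π := sum_nonneg fun I _ => prod_nonneg fun c _ => hΦ _
  have hX : ∑ π, X π ≤ A * N ^ 2 := by
    calc ∑ π, X π = ∑ I ∈ powersetCard κ univ, ∑ π : Bool → V → M, ∏ c, Φ #(I.image (π c)) :=
          sum_comm
      _ ≤ ∑ _I ∈ powersetCard κ (univ : Finset V), ((κ + 1) * B) ^ 2 * N ^ 2 := by
          refine sum_le_sum fun I hI => ?_
          obtain rfl := (mem_powersetCard.1 hI).2
          exact sum_prod_card_image_le I hΦ hB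
      _ ≤ A * N ^ 2 := by
          rw [sum_const, card_powersetCard, card_univ, nsmul_eq_mul, ← mul_assoc]
          gcongr
  have hlarge : (#{π : Bool → V → M | ∃ c y, F < fiberCard (π c) univ y} : ℝ) < N ^ 2 / 2 := by
    linarith [card_filter_exists_lt_fiberCard_le (V := V) (M := M) F,
      mul_lt_mul_of_pos_right hF (pow_pos hN 2)]
  obtain ⟨π, -, hπ⟩ : ∃ π ∈ (univ : Finset (Bool → V → M)),
      (if ∃ c y, F < fiberCard (π c) univ y then 1 else 0) + (2 * A)⁻¹ * X π < 1 := by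
    refine exists_lt_of_sum_lt ?_
    have hhalf : (2 * A)⁻¹ * ∑ π, X π ≤ N ^ 2 / 2 := by
      rw [inv_mul_le_iff₀ (by positivity)]
      linarith
    rw [sum_add_distrib, ← mul_sum, sum_boole, sum_const, card_univ, nsmul_eq_mul, mul_one,
      Fintype.card_fun, Fintype.card_bool, Nat.cast_pow]
    linarith
  have hX' : 0 ≤ (2 * A)⁻¹ * X π := mul_nonneg (by positivity) (hX₀ π)
  split_ifs at hπ with hfibre
  · linarith
  · rw [zero_add, inv_mul_lt_iff₀ (by positivity), mul_one] at hπ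
    exact ⟨π, by simpa using hfibre, hπ.le⟩

end RandomMaps

section Assembly

variable {V M : Type*} [Nonempty V] [Fintype M] [DecidableEq M]
  {π : Bool → V → M} {S : Finset (Bool × Sym2 M)} {k κ s h F i : ℕ} {Δ : ℝ}

theorem card_inter_openPairs_lt {J : Finset V}
    (hJ : (twoBite π (baseGraph S)).IsIndepSet (J : Set V))
    (hi : ∀ c c', #(S ∩ innerPairs π J (baseGraph S) c c') < 8 * i) :
    #(S ∩ openPairs π J (baseGraph S)) < 32 * i := by
  calc _ ≤ ∑ j : Bool × Bool, #(S ∩ innerPairs π J (baseGraph S) j.1 j.2) :=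
        (card_le_card (inter_openPairs_subset hJ)).trans card_biUnion_le
    _ < ∑ _j : Bool × Bool, 8 * i :=
        sum_lt_sum_of_nonempty univ_nonempty fun j _ => hi j.1 j.2
    _ = 32 * i := by
        rw [sum_const, card_univ, Fintype.card_prod, Fintype.card_bool, smul_eq_mul]
        ring

theorem cliqueFree_compl_twoBite [Fintype V] (hF : ∀ c y, fiberCard (π c) univ y ≤ F)
    (hΔ : 2 * (h : ℝ) ≤ s * Δ) (hκ : κ + 2 * (s * F) ≤ k) (hheavy : ¬HeavySpot π k s h S)
    (hinner : ¬∃ I ∈ powersetCard κ (univ : Finset V), ∃ j ∈ (univ : Finset (Bool × Bool)),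
      (∀ c, InducedDegreeLE Δ (baseGraph S c) (I.image (π c))) ∧
        8 * i ≤ #(S ∩ innerPairs π I (baseGraph S) j.1 j.2))
    (hopen : ¬∃ I ∈ powersetCard κ (univ : Finset V),
      #(S ∩ openPairs π I (baseGraph S)) < 32 * i) :
    (twoBite π (baseGraph S))ᶜ.CliqueFree k := by
  intro I hI
  obtain ⟨J, hJI, hJ, hlow⟩ := exists_inducedDegreeLE_subset
    (fun c y => (fiberCard_mono (subset_univ I) y).trans (hF c y)) hheavy hΔ hκ hI.card_eq
  have hmem : J ∈ powersetCard κ (univ : Finset V) := mem_powersetCard.2 ⟨subset_univ _, hJ⟩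
  have hindep : (twoBite π (baseGraph S)).IsIndepSet (J : Set V) :=
    ((SimpleGraph.isClique_compl _).1 hI.isClique).mono (coe_subset.2 hJI)
  refine hopen ⟨J, hmem, card_inter_openPairs_lt hindep fun c c' => ?_⟩
  by_contra! hle
  exact hinner ⟨J, hmem, (c, c'), mem_univ _, hlow, hle⟩

end Assembly

section RandomMaps

variable {V M : Type*} [Fintype V] [Nonempty V] [Fintype M] [DecidableEq M]

/-- The contribution of one colour to the probability that a set of `κ` vertices whose projection
has `r` elements has few open edges. -/
noncomputable def colourWeight (p z D : ℝ) (κ r : ℕ) : ℝ :=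
  Real.exp (-(p * (1 - z) / 2) * (r * r - r) + p * D / 2 * (κ - r))

theorem subsetProb_exists_good_few_open_le {π : Bool → V → M} {p W D d z : ℝ} {κ k F q s t : ℕ}
    (hp : p ∈ Set.Icc 0 1) (hz : z ∈ Set.Ioc 0 1) (hD : 0 ≤ D) (hF₀ : 0 < F)
    (hF : ∀ c x, fiberCard (π c) univ x ≤ F) (hκ : κ ≤ k) (hd : p * (F * d) ^ 2 ≤ 1)
    (hs : (k : ℝ) + s * s * (q * F) < s * W) :
    subsetProb p univ (fun S => ∃ I ∈ powersetCard κ univ,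
      (∀ c, DegreeLE (π c) D (baseGraph S c)) ∧ (∀ c, CodegreeLE q (baseGraph S c)) ∧
        #(S ∩ openPairs π I (baseGraph S)) < t) ≤
      z⁻¹ ^ t * Real.exp (p * κ * F + p * D * (s * s * (q * F)) +
        (2 * p ^ 3 * k ^ 2 + Real.exp (p * W ^ 2 - d + p * Real.exp 1 * k) +
          Real.exp (p * Real.exp (p * D + 1) * k - W / F)) * (2 * Fintype.card M)) *
        ∑ I ∈ powersetCard κ univ, ∏ c, colourWeight p z D κ #(I.image (π c)) := by
  rw [mul_sum]
  refine (subsetProb_exists hp _ _).trans (sum_le_sum fun I hI => ?_)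
  have hI : #I = κ := (mem_powersetCard.1 hI).2
  refine (subsetProb_good_few_open_le hp hz hD hF₀
    (fun c x => (fiberCard_mono (subset_univ I) x).trans (hF c x))
    (k := k) (mod_cast hI.trans_le hκ) hd hs).trans_eq ?_
  have hoff (T : Finset M) : (#T.offDiag : ℝ) = #T * #T - #T := by
    rw [offDiag_card, Nat.cast_sub (Nat.le_mul_self _), Nat.cast_mul]
  simp only [colourWeight, Fintype.prod_bool, Fintype.sum_bool, hoff, hI]
  rw [mul_assoc (z⁻¹ ^ t), ← Real.exp_add, ← Real.exp_add]
  congr 2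
  ring

end RandomMaps

section Parameters

theorem exp_neg_le_inv_add_one {x : ℝ} (hx : 0 ≤ x) : Real.exp (-x) ≤ (x + 1)⁻¹ := by
  rw [Real.exp_neg]
  gcongr
  exact Real.add_one_le_exp x

theorem two_pow_le_exp (k : ℕ) : (2 : ℝ) ^ k ≤ Real.exp k := by
  rw [← Real.exp_one_pow k]
  gcongr
  linarith [Real.add_one_le_exp (1 : ℝ)]

theorem choose_le_exp_mul_div_pow (n r : ℕ) :
    (n.choose r : ℝ) ≤ Real.exp r * (n / r : ℝ) ^ r := by
  rcases r.eq_zero_or_pos with rfl | hr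
  · simp
  calc (n.choose r : ℝ) ≤ (n : ℝ) ^ r / r.factorial := Nat.choose_le_pow_div _ _
    _ = (r : ℝ) ^ r / r.factorial * (n / r : ℝ) ^ r := by
        rw [div_pow]
        field_simp
    _ ≤ Real.exp r * (n / r : ℝ) ^ r := by
        gcongr
        exact Real.pow_div_factorial_le_exp _ (Nat.cast_nonneg _) _

theorem choose_mul_div_pow_le {m r κ : ℕ} (hm : m ≠ 0) (hr : r ≤ κ) :
    (m.choose r : ℝ) * (r / m : ℝ) ^ κ ≤ Real.exp r * (r / m : ℝ) ^ (κ - r) := by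
  rcases r.eq_zero_or_pos with rfl | hr₀
  · simp
  calc (m.choose r : ℝ) * (r / m : ℝ) ^ κ ≤ Real.exp r * (m / r : ℝ) ^ r * (r / m : ℝ) ^ κ := by
        gcongr
        exact choose_le_exp_mul_div_pow m r
    _ = Real.exp r * (r / m : ℝ) ^ (κ - r) := by
        obtain ⟨j, rfl⟩ := Nat.exists_eq_add_of_le hr
        rw [pow_add, Nat.add_sub_cancel_left, mul_assoc, ← mul_assoc (_ ^ r), ← mul_pow,
          div_mul_div_cancel₀ (by positivity), div_self (by positivity), one_pow, one_mul]

/-- Parameters of the construction for sets of size `k` on `n` vertices, with `k = y ^ 50` large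
and `L = log k`: the base graphs have `m` vertices, and the fibres of the random maps have at most
`F` elements. An independent set of size `k` is thinned to `κ` vertices by removing the fibres of
`s` vertices of high degree in each colour, and `b` bounds the number of base vertices with many
neighbours in a projection. -/
structure Params (k n : ℕ) where
  (m F s b κ : ℕ)
  (L y : ℝ)
  exp_L : Real.exp L = k
  exp_L_div : Real.exp (L / 50) = y
  le_L : 10 ^ 6 ≤ L
  L_pow_le : L ^ 10 ≤ y
  log_L_le : 10 ^ 7 * Real.log L ≤ L
  n_le : 3 * L * n ≤ y ^ 100
  le_m : y ^ 99 ≤ m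
  m_le : m ≤ 2 * y ^ 99
  le_F : y ≤ F
  F_le : F ≤ 2 * y
  le_s : 20 * y ^ 30 ≤ s
  s_le : s ≤ 21 * y ^ 30
  le_b : y ^ 22 ≤ b
  b_le : b ≤ 2 * y ^ 22
  κ_add : κ + 2 * (s * F) = k

namespace Params

variable {k n : ℕ} (P : Params k n)

/-- The edge probability of the base graphs, with `y ^ 50 = k`. -/
noncomputable def p : ℝ :=
  1.2 * P.L / P.y ^ 50

theorem L_pos : 0 < P.L := by
  linarith [P.le_L]

theorem y_pos : 0 < P.y := by
  rw [← P.exp_L_div]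
  exact Real.exp_pos _

theorem le_y : 10 ^ 6 ≤ P.y :=
  P.le_L.trans <| (le_self_pow₀ (by linarith [P.le_L]) (by norm_num)).trans P.L_pow_le

theorem one_le_y_pow (i : ℕ) : 1 ≤ P.y ^ i :=
  one_le_pow₀ (by linarith [P.le_y])

theorem mul_L_pow_mul_y_pow_le (C : ℝ) (a i j : ℕ) (hC : C ≤ 10 ^ 6 := by norm_num)
    (ha : a ≤ 9 := by norm_num) (hij : i + 1 ≤ j := by norm_num) :
    C * P.L ^ a * P.y ^ i ≤ P.y ^ j := by
  have hL₀ := P.L_pos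
  have hy₀ := P.y_pos
  have hL₁ : 1 ≤ P.L := by linarith [P.le_L]
  have hy₁ : 1 ≤ P.y := by linarith [P.le_y]
  calc C * P.L ^ a * P.y ^ i ≤ P.L * P.L ^ 9 * P.y ^ i := by
        gcongr
        exact hC.trans P.le_L
    _ = P.L ^ 10 * P.y ^ i := by ring
    _ ≤ P.y * P.y ^ i := by
        gcongr
        exact P.L_pow_le
    _ = P.y ^ (i + 1) := by ring
    _ ≤ P.y ^ j := pow_le_pow_right₀ hy₁ hij

theorem y_pow_eq_exp (i : ℕ) : P.y ^ i = Real.exp (i / 50 * P.L) := by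
  rw [← P.exp_L_div, ← Real.exp_nat_mul]
  congr 1
  ring

theorem k_eq : (k : ℝ) = P.y ^ 50 := by
  rw [← P.exp_L, P.y_pow_eq_exp]
  norm_num

theorem one_le_k (P : Params k n) : (1 : ℝ) ≤ k := by
  rw [P.k_eq]
  exact P.one_le_y_pow 50

theorem p_pos : 0 < P.p := by
  have := P.L_pos
  have := P.y_pos
  unfold Params.p
  positivity

theorem p_mul_y_pow : P.p * P.y ^ 50 = 1.2 * P.L := by
  have := P.y_pos
  unfold Params.p
  field_simp

theorem p_mem_Icc : P.p ∈ Set.Icc 0 1 := by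
  refine ⟨P.p_pos.le, (div_le_one (pow_pos P.y_pos 50)).2 ?_⟩
  linarith [P.mul_L_pow_mul_y_pow_le 1.2 1 0 50]

theorem m_pos : (0 : ℝ) < P.m :=
  (pow_pos P.y_pos 99).trans_le P.le_m

theorem F_pos : 0 < P.F :=
  Nat.cast_pos.1 (P.y_pos.trans_le P.le_F)

theorem κ_le : P.κ ≤ k :=
  (Nat.le_add_right _ _).trans_eq P.κ_add

theorem κ_le_y_pow : (P.κ : ℝ) ≤ P.y ^ 50 := by
  rw [← P.k_eq]
  exact_mod_cast P.κ_le

theorem le_κ : P.y ^ 50 - 84 * P.y ^ 31 ≤ P.κ := by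
  have hy := P.y_pos
  have hκ : (P.κ : ℝ) + 2 * (P.s * P.F) = k := mod_cast P.κ_add
  have hsF : (P.s : ℝ) * P.F ≤ 21 * P.y ^ 30 * (2 * P.y) := by
    gcongr
    exacts [P.s_le, P.F_le]
  rw [P.k_eq] at hκ
  linarith

theorem mul_y_pow_le : 10 ^ 6 * P.y ^ 50 ≤ P.L * P.y ^ 50 :=
  mul_le_mul_of_nonneg_right P.le_L (pow_pos P.y_pos 50).le

theorem n_le_exp : (n : ℝ) ≤ Real.exp (2 * P.L) := by
  have hexp : Real.exp (2 * P.L) = P.y ^ 100 := by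
    rw [P.y_pow_eq_exp]
    norm_num
  rw [hexp]
  exact (le_mul_of_one_le_left (Nat.cast_nonneg _) (by linarith [P.le_L])).trans P.n_le

theorem n_div_m_le : (n / P.m : ℝ) ≤ P.y * Real.exp (-2) := by
  have hy := P.y_pos
  have hL := P.L_pos
  have hexp : Real.exp 2 ≤ 3 * P.L := by
    calc Real.exp 2 = Real.exp 1 ^ 2 := by
          rw [← Real.exp_nat_mul]
          norm_num
      _ ≤ 3 ^ 2 := by
          gcongr
          linarith [Real.exp_one_lt_d9]
      _ ≤ 3 * P.L := by linarith [P.le_L]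
  calc (n / P.m : ℝ) ≤ P.y ^ 100 / (3 * P.L) / P.y ^ 99 := by
        gcongr
        · rw [le_div_iff₀ (by positivity), mul_comm]
          exact P.n_le
        · exact P.le_m
    _ = P.y / (3 * P.L) := by field_simp
    _ ≤ P.y * Real.exp (-2) := by
        rw [Real.exp_neg, ← div_eq_mul_inv]
        gcongr

theorem p_mul_n_le : P.p * n ≤ 0.4 * P.y ^ 50 := by
  have hy := P.y_pos
  rw [Params.p, div_mul_eq_mul_div, div_le_iff₀ (by positivity)]
  linarith [P.n_le]

theorem two_mul_m_mul_exp_le {e : ℝ} (he : e ≤ -(3 * P.L)) :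
    2 * (P.m : ℝ) * Real.exp e ≤ 1 / 100 := by
  have hL := P.le_L
  have hm : 2 * (P.m : ℝ) ≤ 4 * Real.exp (2 * P.L) := by
    have hexp : Real.exp ((99 : ℕ) / 50 * P.L) ≤ Real.exp (2 * P.L) := by
      gcongr
      norm_num
    have hm := P.m_le
    rw [P.y_pow_eq_exp 99] at hm
    linarith
  calc 2 * (P.m : ℝ) * Real.exp e ≤ 4 * Real.exp (2 * P.L) * Real.exp (-(3 * P.L)) := by
        gcongr
    _ = 4 * Real.exp (-P.L) := by
        rw [mul_assoc, ← Real.exp_add]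
        congr 2
        ring
    _ ≤ 4 * (P.L + 1)⁻¹ := by
        gcongr
        exact exp_neg_le_inv_add_one P.L_pos.le
    _ ≤ 4 * (400)⁻¹ := by
        gcongr
        linarith
    _ = 1 / 100 := by norm_num

theorem choose_mul_one_div_m_pow_le :
    (n.choose (P.F + 1) : ℝ) * (1 / P.m : ℝ) ^ (P.F + 1) ≤ Real.exp (-(P.F + 1 : ℕ)) := by
  have hm := P.m_pos
  have hF : P.y ≤ (P.F + 1 : ℕ) := by
    push_cast
    linarith [P.le_F]
  calc (n.choose (P.F + 1) : ℝ) * (1 / P.m : ℝ) ^ (P.F + 1)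
      ≤ Real.exp (P.F + 1 : ℕ) * (n / (P.F + 1 : ℕ) : ℝ) ^ (P.F + 1) *
          (1 / P.m : ℝ) ^ (P.F + 1) := by
        gcongr
        exact choose_le_exp_mul_div_pow n (P.F + 1)
    _ = Real.exp (P.F + 1 : ℕ) * (n / P.m / (P.F + 1 : ℕ) : ℝ) ^ (P.F + 1) := by
        rw [mul_assoc, ← mul_pow]
        congr 2
        ring
    _ ≤ Real.exp (P.F + 1 : ℕ) * Real.exp (-2) ^ (P.F + 1) := by
        gcongr
        rw [div_le_iff₀ (by positivity), mul_comm (Real.exp _)]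
        exact P.n_div_m_le.trans (by gcongr)
    _ = Real.exp (-(P.F + 1 : ℕ)) := by
        rw [← Real.exp_nat_mul, ← Real.exp_add]
        congr 1
        ring

theorem two_mul_m_mul_choose_lt :
    2 * (P.m * (n.choose (P.F + 1) * (1 / P.m : ℝ) ^ (P.F + 1))) < 1 / 2 := by
  have htail : 2 * (P.m : ℝ) * Real.exp (-(P.F + 1 : ℕ)) ≤ 1 / 100 := by
    refine P.two_mul_m_mul_exp_le ?_
    push_cast
    linarith [P.mul_L_pow_mul_y_pow_le 3 1 0 1, P.le_F]
  calc 2 * (P.m * (n.choose (P.F + 1) * (1 / P.m : ℝ) ^ (P.F + 1)))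
      ≤ 2 * (P.m * Real.exp (-(P.F + 1 : ℕ))) := by
        gcongr
        exact P.choose_mul_one_div_m_pow_le
    _ < 1 / 2 := by linarith

theorem choose_κ_le : (n.choose P.κ : ℝ) ≤ Real.exp (P.L * P.y ^ 50) := by
  have hy := P.y_pos
  have hL := P.L_pos
  have hκ : P.y ^ 50 / 2 ≤ P.κ := by linarith [P.le_κ, P.mul_L_pow_mul_y_pow_le 168 0 31 50]
  have hn : (n / P.κ : ℝ) ≤ P.y ^ 50 * Real.exp (-1) := by
    calc (n / P.κ : ℝ) ≤ P.y ^ 100 / (3 * P.L) / (P.y ^ 50 / 2) := by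
          gcongr
          rw [le_div_iff₀ (by positivity), mul_comm]
          exact P.n_le
      _ = P.y ^ 50 / (3 * P.L / 2) := by field_simp
      _ ≤ P.y ^ 50 / Real.exp 1 := by
          gcongr
          linarith [P.le_L, Real.exp_one_lt_d9]
      _ = P.y ^ 50 * Real.exp (-1) := by rw [Real.exp_neg, div_eq_mul_inv]
  calc (n.choose P.κ : ℝ) ≤ Real.exp P.κ * (n / P.κ : ℝ) ^ P.κ := choose_le_exp_mul_div_pow n P.κ
    _ ≤ Real.exp P.κ * (P.y ^ 50 * Real.exp (-1)) ^ P.κ := by gcongr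
    _ = Real.exp (P.L * P.κ) := by
        rw [P.y_pow_eq_exp, mul_pow, ← Real.exp_nat_mul, ← Real.exp_nat_mul, ← Real.exp_add,
          ← Real.exp_add]
        congr 1
        push_cast
        ring
    _ ≤ Real.exp (P.L * P.y ^ 50) := by
        gcongr
        exact P.κ_le_y_pow

theorem div_m_pow_le {r : ℕ} (hr : r ≤ P.κ) :
    (r / P.m : ℝ) ^ (P.κ - r) ≤ Real.exp (-(0.98 * P.L) * (P.κ - r)) := by
  have hy := P.y_pos
  have hbase : (r / P.m : ℝ) ≤ Real.exp (-(0.98 * P.L)) := by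
    have hexp : Real.exp (0.98 * P.L) = P.y ^ 49 := by
      rw [P.y_pow_eq_exp]
      norm_num
    rw [Real.exp_neg, hexp]
    calc (r / P.m : ℝ) ≤ P.y ^ 50 / P.y ^ 99 := by
          gcongr
          exacts [(Nat.cast_le.2 hr).trans P.κ_le_y_pow, P.le_m]
      _ = (P.y ^ 49)⁻¹ := by field_simp
  rw [mul_comm, ← Nat.cast_sub hr, Real.exp_nat_mul]
  gcongr

-- The quadratic term is bounded below by its tangent at `r = (367 / 600) * k`, where the total
-- exponent, as a function of `r`, is close to its maximum.
theorem colour_exponent_le {r : ℝ} (hr₀ : 0 ≤ r) (hr : r ≤ P.y ^ 50) :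
    r + -(0.98 * P.L) * (P.κ - r) + (-(P.p * (1 - 1 / P.L) / 2) * (r * r - r) +
      P.p * (0.41 * P.y ^ 50) / 2 * (P.κ - r)) ≤ -(0.508 * (P.L * P.y ^ 50)) := by
  have hy := P.y_pos
  have hL := P.L_pos
  have hp := P.p_pos
  have hpk := P.p_mul_y_pow
  have htangent : 0.6 * P.L * (367 / 300 * r - (367 / 600) ^ 2 * P.y ^ 50) ≤ P.p / 2 * r ^ 2 := by
    have hsq : 0 ≤ P.p * (r - 367 / 600 * P.y ^ 50) ^ 2 := by positivity
    have hL' : 0.6 * P.L = P.p * P.y ^ 50 / 2 := by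
      rw [hpk]
      ring
    rw [hL']
    linarith
  have hz : P.p * (1 / P.L) / 2 * r ^ 2 ≤ 0.6 * P.y ^ 50 := by
    calc P.p * (1 / P.L) / 2 * r ^ 2 ≤ P.p * (1 / P.L) / 2 * (P.y ^ 50) ^ 2 := by gcongr
      _ = (P.p * P.y ^ 50) * (1 / P.L) / 2 * P.y ^ 50 := by ring
      _ = 0.6 * P.y ^ 50 := by
          rw [hpk]
          field_simp
          norm_num
  have hlinear : P.p / 2 * r ≤ 0.6 * P.L := by
    calc P.p / 2 * r ≤ P.p / 2 * P.y ^ 50 := by gcongr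
      _ = 0.6 * P.L := by linarith
  have hz₀ : 0 ≤ P.p * (1 / P.L) / 2 * r := by positivity
  have hdegree : P.p * (0.41 * P.y ^ 50) / 2 = 0.246 * P.L := by linarith
  have hκ : P.L * (P.y ^ 50 - 84 * P.y ^ 31) ≤ P.L * P.κ := by
    gcongr
    exact P.le_κ
  have hexpand : -(P.p * (1 - 1 / P.L) / 2) * (r * r - r) = -(P.p / 2 * r ^ 2) + P.p / 2 * r +
      P.p * (1 / P.L) / 2 * r ^ 2 - P.p * (1 / P.L) / 2 * r := by ring
  rw [hdegree, hexpand]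
  linarith [P.mul_y_pow_le, P.mul_L_pow_mul_y_pow_le 1000 1 0 50,
    P.mul_L_pow_mul_y_pow_le 100 1 31 50, pow_pos hy 50]

theorem choose_mul_colourWeight_le {r : ℕ} (hr : r ≤ P.κ) :
    (P.m.choose r : ℝ) * (r / P.m : ℝ) ^ P.κ * colourWeight P.p (1 / P.L) (0.41 * P.y ^ 50) P.κ r ≤
      Real.exp (-(0.508 * (P.L * P.y ^ 50))) := by
  have hm : P.m ≠ 0 := (Nat.cast_pos.1 P.m_pos).ne'
  rw [colourWeight]
  calc (P.m.choose r : ℝ) * (r / P.m : ℝ) ^ P.κ * _ ≤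
        Real.exp r * Real.exp (-(0.98 * P.L) * (P.κ - r)) * _ := by
        refine mul_le_mul_of_nonneg_right ((choose_mul_div_pow_le hm hr).trans ?_)
          (Real.exp_pos _).le
        gcongr
        exact P.div_m_pow_le hr
    _ ≤ _ := by
        rw [← Real.exp_add, ← Real.exp_add]
        gcongr
        exact P.colour_exponent_le (Nat.cast_nonneg r) ((Nat.cast_le.2 hr).trans P.κ_le_y_pow)

theorem choose_κ_mul_sq_le :
    (n.choose P.κ : ℝ) * ((P.κ + 1) * Real.exp (-(0.508 * (P.L * P.y ^ 50)))) ^ 2 ≤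
      Real.exp (-(0.015 * (P.L * P.y ^ 50))) := by
  have hκ : (P.κ + 1 : ℝ) ≤ Real.exp (P.y ^ 50) := by
    linarith [Real.add_one_le_exp (P.y ^ 50), P.κ_le_y_pow]
  calc (n.choose P.κ : ℝ) * ((P.κ + 1) * Real.exp (-(0.508 * (P.L * P.y ^ 50)))) ^ 2
      ≤ Real.exp (P.L * P.y ^ 50) *
        (Real.exp (P.y ^ 50) * Real.exp (-(0.508 * (P.L * P.y ^ 50)))) ^ 2 := by
        gcongr
        exact P.choose_κ_le
    _ = Real.exp (2 * P.y ^ 50 - 0.016 * (P.L * P.y ^ 50)) := by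
        rw [← Real.exp_add, ← Real.exp_nat_mul, ← Real.exp_add]
        congr 1
        push_cast
        ring
    _ ≤ Real.exp (-(0.015 * (P.L * P.y ^ 50))) := by
        gcongr
        linarith [P.mul_y_pow_le, pow_pos P.y_pos 50]

theorem exists_maps : ∃ π : Bool → Fin n → Fin P.m, (∀ c x, fiberCard (π c) univ x ≤ P.F) ∧
    ∑ I ∈ powersetCard P.κ univ, ∏ c,
      colourWeight P.p (1 / P.L) (0.41 * P.y ^ 50) P.κ #(I.image (π c)) ≤
        2 * Real.exp (-(0.015 * (P.L * P.y ^ 50))) := by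
  have : Nonempty (Fin P.m) := ⟨⟨0, Nat.cast_pos.1 P.m_pos⟩⟩
  refine exists_fiberCard_le_and_sum_prod_le (V := Fin n) (M := Fin P.m)
    (Φ := colourWeight P.p (1 / P.L) (0.41 * P.y ^ 50) P.κ) (fun r => (Real.exp_pos _).le)
    (B := Real.exp (-(0.508 * (P.L * P.y ^ 50)))) ?_ (Real.exp_pos _) ?_ ?_
  · rw [Fintype.card_fin]
    exact fun r hr => P.choose_mul_colourWeight_le hr
  · rw [Fintype.card_fin]
    exact P.choose_κ_mul_sq_le
  · rw [Fintype.card_fin, Fintype.card_fin]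
    exact P.two_mul_m_mul_choose_lt

theorem subsetProb_not_degreeLE_lt {π : Bool → Fin n → Fin P.m}
    (hF : ∀ c x, fiberCard (π c) univ x ≤ P.F) :
    subsetProb P.p univ (fun S => ¬∀ c, DegreeLE (π c) (0.41 * P.y ^ 50) (baseGraph S c)) <
      1 / 5 := by
  have hF₀ : (0 : ℝ) < P.F := Nat.cast_pos.2 P.F_pos
  have hlamF : 0.01 / P.F * P.F ≤ (1 : ℝ) := by
    rw [div_mul_cancel₀ _ hF₀.ne']
    norm_num
  refine (subsetProb_not_degreeLE_le P.p_mem_Icc (by positivity) hlamF hF).trans_lt ?_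
  rw [Fintype.card_fin, Fintype.card_fin]
  refine (P.two_mul_m_mul_exp_le ?_).trans_lt (by norm_num)
  have hexpand : P.p * (0.01 / P.F) * (1 + 0.01 / P.F * P.F) * n -
      0.01 / P.F * (0.41 * P.y ^ 50) = 0.01 / P.F * (1.01 * (P.p * n) - 0.41 * P.y ^ 50) := by
    field_simp
    ring
  have hLF : 3 * P.L * P.F ≤ 3 * P.L * (2 * P.y) :=
    mul_le_mul_of_nonneg_left P.F_le (by linarith [P.L_pos])
  rw [hexpand, div_mul_eq_mul_div, div_le_iff₀ hF₀]
  linarith [P.mul_L_pow_mul_y_pow_le 200000 1 1 50, P.p_mul_n_le, pow_pos P.y_pos 50]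

theorem m_mul_p_sq_sq_le : (P.m * P.p ^ 2) ^ 2 ≤ 1 / P.y := by
  have hy := P.y_pos
  have hbase : P.m * P.p ^ 2 ≤ 2.88 * P.L ^ 2 / P.y := by
    rw [le_div_iff₀ hy]
    calc P.m * P.p ^ 2 * P.y ≤ 2 * P.y ^ 99 * P.p ^ 2 * P.y := by
          gcongr
          exact P.m_le
      _ = 2 * (P.p * P.y ^ 50) ^ 2 := by ring
      _ = 2.88 * P.L ^ 2 := by
          rw [P.p_mul_y_pow]
          ring
  calc (P.m * P.p ^ 2) ^ 2 ≤ (2.88 * P.L ^ 2 / P.y) ^ 2 := by gcongr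
    _ = 2.88 ^ 2 * P.L ^ 4 * P.y ^ 0 / P.y / P.y := by ring
    _ ≤ P.y ^ 1 / P.y / P.y := by
        gcongr
        exact P.mul_L_pow_mul_y_pow_le (2.88 ^ 2) 4 0 1
    _ = 1 / P.y := by field_simp

theorem subsetProb_not_codegreeLE_lt :
    subsetProb P.p (univ : Finset (Bool × Sym2 (Fin P.m)))
      (fun S => ¬∀ c, CodegreeLE 401 (baseGraph S c)) < 1 / 5 := by
  have hy := P.y_pos
  refine (subsetProb_not_codegreeLE_le P.p_mem_Icc).trans_lt ?_
  rw [Fintype.card_fin]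
  calc 2 * (P.m : ℝ) ^ 2 * (P.m * P.p ^ 2) ^ (401 + 1) =
        2 * (P.m : ℝ) ^ 2 * ((P.m * P.p ^ 2) ^ 2) ^ 201 := by rw [← pow_mul]
    _ ≤ 2 * (2 * P.y ^ 99) ^ 2 * (1 / P.y) ^ 201 := by
        gcongr
        exacts [P.m_le, P.m_mul_p_sq_sq_le]
    _ = 8 / P.y ^ 3 := by
        field_simp
        norm_num
    _ < 1 / 5 := by
        rw [div_lt_div_iff₀ (by positivity) (by norm_num)]
        linarith [P.mul_L_pow_mul_y_pow_le 100 0 0 3]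

theorem mul_two_pow_mul_exp_div_lt {N C E T : ℝ} (hN : N ≤ Real.exp (k * (2 * P.L))) (hC₀ : 0 ≤ C)
    (hC : C ≤ 4) (hE : E ≤ k) (hT : Real.exp (3 * P.L * k) ≤ T) :
    N * (C * (2 ^ k * (Real.exp E / T))) < 1 / 5 := by
  have hT₀ : 0 < T := (Real.exp_pos _).trans_le hT
  calc N * (C * (2 ^ k * (Real.exp E / T))) ≤ Real.exp (k * (2 * P.L)) *
        (4 * (Real.exp k * (Real.exp k / Real.exp (3 * P.L * k)))) := by
        gcongr
        exact two_pow_le_exp k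
    _ = 4 * Real.exp (-(k * (P.L - 2))) := by
        rw [← Real.exp_sub, ← Real.exp_add, mul_left_comm, ← Real.exp_add]
        congr 2
        ring
    _ ≤ 4 * Real.exp (-30) := by
        gcongr
        nlinarith [P.one_le_k, P.le_L]
    _ ≤ 4 * (30 + 1)⁻¹ := by
        gcongr
        exact exp_neg_le_inv_add_one (by norm_num)
    _ < 1 / 5 := by norm_num

theorem exp_le_y_pow_pow {a h : ℕ} (h150 : 150 * k ≤ a * h) :
    Real.exp (3 * P.L * k) ≤ (P.y ^ a) ^ h := by
  have h150' : 150 * (k : ℝ) ≤ a * h := mod_cast h150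
  rw [P.y_pow_eq_exp, ← Real.exp_nat_mul]
  refine Real.exp_le_exp.2 ?_
  linarith [mul_le_mul_of_nonneg_left h150' P.L_pos.le]

theorem subsetProb_heavySpot_lt (π : Bool → Fin n → Fin P.m) :
    subsetProb P.p univ (HeavySpot π k P.s (10 * k)) < 1 / 5 := by
  have hp := P.p_pos
  have hy := P.y_pos
  refine (subsetProb_heavySpot_le P.p_mem_Icc (P.one_le_y_pow 17)).trans_lt ?_
  rw [Fintype.card_fin]
  refine P.mul_two_pow_mul_exp_div_lt ?_ (by norm_num) (by norm_num) ?_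
    (P.exp_le_y_pow_pow (by omega))
  · rw [Real.exp_nat_mul]
    gcongr
    exact P.n_le_exp
  · rw [P.k_eq]
    calc P.p * P.y ^ 17 * (P.s * P.y ^ 50) ≤ P.p * P.y ^ 17 * (21 * P.y ^ 30 * P.y ^ 50) := by
          gcongr
          exact P.s_le
      _ = P.p * P.y ^ 50 * (21 * P.y ^ 47) := by ring
      _ = 25.2 * P.L ^ 1 * P.y ^ 47 := by
          rw [P.p_mul_y_pow]
          ring
      _ ≤ P.y ^ 50 := P.mul_L_pow_mul_y_pow_le 25.2 1 47 50

theorem subsetProb_many_innerPairs_lt [Nonempty (Fin n)] {π : Bool → Fin n → Fin P.m}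
    (hF : ∀ c x, fiberCard (π c) univ x ≤ P.F) :
    subsetProb P.p univ (fun S => ∃ I ∈ powersetCard P.κ univ, ∃ j ∈ (univ : Finset (Bool × Bool)),
      (∀ c, InducedDegreeLE (P.y ^ 20) (baseGraph S c) (I.image (π c))) ∧
        8 * (50 * k) ≤ #(S ∩ innerPairs π I (baseGraph S) j.1 j.2)) < 1 / 5 := by
  have hp := P.p_pos
  have hy := P.y_pos
  have hκ : (P.κ : ℝ) ≤ k := Nat.cast_le.2 P.κ_le
  refine (subsetProb_exists_le (b := 4 * (2 ^ k *
    (Real.exp (P.p * P.y ^ 5 * (k * (P.F * P.y ^ 20) ^ 2)) / (P.y ^ 5) ^ (50 * k))))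
    P.p_mem_Icc _ _ fun I hI => ?_).trans_lt ?_
  · refine (subsetProb_many_innerPairs_le P.F_pos
      (fun c x => (fiberCard_mono (subset_univ I) x).trans (hF c x)) P.p_mem_Icc
      (P.one_le_y_pow 5) (by positivity)).trans ?_
    rw [(mem_powersetCard.1 hI).2]
    gcongr
    exacts [one_le_two, P.κ_le]
  rw [card_powersetCard, card_univ, Fintype.card_fin]
  refine P.mul_two_pow_mul_exp_div_lt ?_ (by norm_num) le_rfl ?_ (P.exp_le_y_pow_pow (by omega))
  · calc (n.choose P.κ : ℝ) ≤ (n : ℝ) ^ P.κ := mod_cast Nat.choose_le_pow _ _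
      _ ≤ Real.exp (2 * P.L) ^ P.κ := by
          gcongr
          exact P.n_le_exp
      _ = Real.exp (P.κ * (2 * P.L)) := by rw [Real.exp_nat_mul]
      _ ≤ Real.exp (k * (2 * P.L)) := by
          have := P.L_pos
          gcongr
  · rw [P.k_eq]
    calc P.p * P.y ^ 5 * (P.y ^ 50 * (P.F * P.y ^ 20) ^ 2) ≤
          P.p * P.y ^ 5 * (P.y ^ 50 * (2 * P.y * P.y ^ 20) ^ 2) := by
          gcongr
          exact P.F_le
      _ = P.p * P.y ^ 50 * (4 * P.y ^ 47) := by ring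
      _ = 4.8 * P.L ^ 1 * P.y ^ 47 := by
          rw [P.p_mul_y_pow]
          ring
      _ ≤ P.y ^ 50 := P.mul_L_pow_mul_y_pow_le 4.8 1 47 50

theorem p_mul_F_mul_y_pow_sq_le : P.p * (P.F * P.y ^ 15) ^ 2 ≤ 1 := by
  have hp := P.p_pos
  have hy := P.y_pos
  calc P.p * (P.F * P.y ^ 15) ^ 2 ≤ P.p * (2 * P.y * P.y ^ 15) ^ 2 := by
        gcongr
        exact P.F_le
    _ = 4.8 * P.L ^ 1 * P.y ^ 32 / P.y ^ 50 := by
        unfold Params.p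
        ring
    _ ≤ 1 := (div_le_one (by positivity)).2 (P.mul_L_pow_mul_y_pow_le 4.8 1 32 50)

theorem p_mul_κ_mul_F_le : P.p * P.κ * P.F ≤ 2.4 * P.L ^ 1 * P.y ^ 1 := by
  have hp := P.p_pos
  have hy := P.y_pos
  calc P.p * P.κ * P.F ≤ P.p * P.y ^ 50 * (2 * P.y) := by
        gcongr
        exacts [P.κ_le_y_pow, P.F_le]
    _ = 2.4 * P.L ^ 1 * P.y ^ 1 := by
        rw [P.p_mul_y_pow]
        ring

theorem k_add_b_sq_lt : (k : ℝ) + P.b * P.b * ((401 : ℕ) * P.F) < P.b * P.y ^ 30 := by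
  have hy := P.y_pos
  have hb : (0 : ℝ) < P.b := (pow_pos hy 22).trans_le P.le_b
  have hbF : (P.b : ℝ) * ((401 : ℕ) * P.F) ≤ P.y ^ 30 / 2 := by
    calc (P.b : ℝ) * ((401 : ℕ) * P.F) ≤ 2 * P.y ^ 22 * ((401 : ℕ) * (2 * P.y)) := by
          gcongr
          exacts [P.b_le, P.F_le]
      _ = 3208 * P.L ^ 0 * P.y ^ 23 / 2 := by
          push_cast
          ring
      _ ≤ P.y ^ 30 / 2 := by
          gcongr
          exact P.mul_L_pow_mul_y_pow_le 3208 0 23 30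
  have hk : (k : ℝ) < P.b * (P.y ^ 30 / 2) := by
    calc (k : ℝ) < P.y ^ 22 * (P.y ^ 30 / 2) := by
          rw [P.k_eq]
          linarith [P.mul_L_pow_mul_y_pow_le 4 0 50 52, pow_pos hy 50]
      _ ≤ P.b * (P.y ^ 30 / 2) := by
          gcongr
          exact P.le_b
  calc (k : ℝ) + P.b * P.b * ((401 : ℕ) * P.F) = k + P.b * (P.b * ((401 : ℕ) * P.F)) := by ring
    _ < P.b * (P.y ^ 30 / 2) + P.b * (P.y ^ 30 / 2) :=
        add_lt_add_of_lt_of_le hk (mul_le_mul_of_nonneg_left hbF hb.le)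
    _ = P.b * P.y ^ 30 := by ring

theorem p_mul_k : P.p * k = 1.2 * P.L := by
  rw [P.k_eq, P.p_mul_y_pow]

theorem cubic_error_le : 2 * P.p ^ 3 * k ^ 2 * (2 * P.m) ≤ P.y ^ 50 / 2 := by
  have hp := P.p_pos
  have hy := P.y_pos
  rw [P.k_eq]
  calc 2 * P.p ^ 3 * (P.y ^ 50) ^ 2 * (2 * P.m)
      ≤ 2 * P.p ^ 3 * (P.y ^ 50) ^ 2 * (2 * (2 * P.y ^ 99)) := by
        gcongr
        exact P.m_le
    _ = 8 * (P.p * P.y ^ 50) ^ 3 * P.y ^ 49 := by ring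
    _ = 27.648 * P.L ^ 3 * P.y ^ 49 / 2 := by
        rw [P.p_mul_y_pow]
        ring
    _ ≤ P.y ^ 50 / 2 := by
        gcongr
        exact P.mul_L_pow_mul_y_pow_le 27.648 3 49 50

theorem light_error_le :
    2 * (P.m : ℝ) * Real.exp (P.p * (P.y ^ 30) ^ 2 - P.y ^ 15 + P.p * Real.exp 1 * k) ≤
      1 / 100 := by
  have hL := P.L_pos
  have hquad : P.p * (P.y ^ 30) ^ 2 = 1.2 * P.L * P.y ^ 10 := by
    rw [← P.p_mul_y_pow]
    ring
  have hlinear : P.p * Real.exp 1 * k ≤ 3.6 * P.L := by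
    calc P.p * Real.exp 1 * k = 1.2 * P.L * Real.exp 1 := by
          rw [← P.p_mul_k]
          ring
      _ ≤ 1.2 * P.L * 3 := by
          gcongr
          linarith [Real.exp_one_lt_d9]
      _ = 3.6 * P.L := by ring
  refine P.two_mul_m_mul_exp_le ?_
  rw [hquad]
  linarith [P.mul_L_pow_mul_y_pow_le 2.4 1 10 15, P.mul_L_pow_mul_y_pow_le 100 1 0 15]

theorem heavy_error_le :
    2 * (P.m : ℝ) * Real.exp (P.p * Real.exp (P.p * (0.41 * P.y ^ 50) + 1) * k - P.y ^ 30 / P.F) ≤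
      1 / 100 := by
  have hp := P.p_pos
  have hy := P.y_pos
  have hL := P.L_pos
  have hF : (0 : ℝ) < P.F := Nat.cast_pos.2 P.F_pos
  have hexp : Real.exp (P.p * (0.41 * P.y ^ 50) + 1) ≤ P.y ^ 25 * 3 := by
    rw [Real.exp_add, P.y_pow_eq_exp 25, mul_left_comm, P.p_mul_y_pow]
    exact mul_le_mul (Real.exp_le_exp.2 (by push_cast; linarith))
      (by linarith [Real.exp_one_lt_d9]) (Real.exp_pos _).le (Real.exp_pos _).le
  have hgain : P.y ^ 29 / 2 ≤ P.y ^ 30 / P.F := by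
    rw [div_le_div_iff₀ (by norm_num) hF]
    calc P.y ^ 29 * P.F ≤ P.y ^ 29 * (2 * P.y) := by
          gcongr
          exact P.F_le
      _ = P.y ^ 30 * 2 := by ring
  refine P.two_mul_m_mul_exp_le ?_
  calc P.p * Real.exp (P.p * (0.41 * P.y ^ 50) + 1) * k - P.y ^ 30 / P.F ≤
        P.p * (P.y ^ 25 * 3) * k - P.y ^ 29 / 2 := by gcongr
    _ = 3.6 * P.L * P.y ^ 25 - P.y ^ 29 / 2 := by
        rw [← mul_rotate, mul_comm _ P.p, ← mul_assoc, P.p_mul_k]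
        ring
    _ ≤ -(3 * P.L) := by
        linarith [P.mul_L_pow_mul_y_pow_le 20 1 25 29, P.mul_L_pow_mul_y_pow_le 100 1 0 29]

theorem outer_error_le :
    (2 * P.p ^ 3 * k ^ 2 + Real.exp (P.p * (P.y ^ 30) ^ 2 - P.y ^ 15 + P.p * Real.exp 1 * k) +
      Real.exp (P.p * Real.exp (P.p * (0.41 * P.y ^ 50) + 1) * k - P.y ^ 30 / P.F)) * (2 * P.m) ≤
      P.y ^ 50 := by
  linarith [P.cubic_error_le, P.light_error_le, P.heavy_error_le,
    P.mul_L_pow_mul_y_pow_le 100 0 0 50]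

theorem codegree_error_le :
    P.p * (0.41 * P.y ^ 50) * (P.b * P.b * ((401 : ℕ) * P.F)) ≤ 1600 * P.L ^ 1 * P.y ^ 45 := by
  have hp := P.p_pos
  have hy := P.y_pos
  have hL := P.L_pos
  calc P.p * (0.41 * P.y ^ 50) * (P.b * P.b * ((401 : ℕ) * P.F))
      ≤ P.p * (0.41 * P.y ^ 50) * (2 * P.y ^ 22 * (2 * P.y ^ 22) * ((401 : ℕ) * (2 * P.y))) := by
        gcongr
        exacts [P.b_le, P.b_le, P.F_le]
    _ = P.p * P.y ^ 50 * (1315.28 * P.y ^ 45) := by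
        push_cast
        ring
    _ = 1578.336 * P.L ^ 1 * P.y ^ 45 := by
        rw [P.p_mul_y_pow]
        ring
    _ ≤ 1600 * P.L ^ 1 * P.y ^ 45 := by
        gcongr
        norm_num

theorem one_div_L_inv_pow_le :
    (1 / P.L)⁻¹ ^ (32 * (50 * k)) ≤ Real.exp (0.001 * (P.L * P.y ^ 50)) := by
  have hy := P.y_pos
  have hL := P.L_pos
  calc (1 / P.L)⁻¹ ^ (32 * (50 * k)) = Real.exp (1600 * Real.log P.L * P.y ^ 50) := by
        rw [one_div, inv_inv, ← P.k_eq]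
        nth_rewrite 1 [← Real.exp_log hL]
        rw [← Real.exp_nat_mul]
        congr 1
        push_cast
        ring
    _ ≤ Real.exp (0.001 * P.L * P.y ^ 50) := by
        have hlog : 1600 * Real.log P.L ≤ 0.001 * P.L := by linarith [P.log_L_le]
        exact Real.exp_le_exp.2 (mul_le_mul_of_nonneg_right hlog (by positivity))
    _ = Real.exp (0.001 * (P.L * P.y ^ 50)) := by rw [mul_assoc]

theorem subsetProb_few_open_lt [Nonempty (Fin n)] {π : Bool → Fin n → Fin P.m}
    (hF : ∀ c x, fiberCard (π c) univ x ≤ P.F)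
    (hπ : ∑ I ∈ powersetCard P.κ univ, ∏ c, colourWeight P.p (1 / P.L) (0.41 * P.y ^ 50) P.κ
      #(I.image (π c)) ≤ 2 * Real.exp (-(0.015 * (P.L * P.y ^ 50)))) :
    subsetProb P.p univ (fun S => ∃ I ∈ powersetCard P.κ univ,
      (∀ c, DegreeLE (π c) (0.41 * P.y ^ 50) (baseGraph S c)) ∧
        (∀ c, CodegreeLE 401 (baseGraph S c)) ∧
          #(S ∩ openPairs π I (baseGraph S)) < 32 * (50 * k)) < 1 / 5 := by
  have hy := P.y_pos
  have hL := P.L_pos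
  have hz : 1 / P.L ∈ Set.Ioc 0 1 :=
    ⟨by positivity, (div_le_one hL).2 (by linarith [P.le_L])⟩
  have hsum₀ : 0 ≤ ∑ I ∈ powersetCard P.κ univ, ∏ c,
      colourWeight P.p (1 / P.L) (0.41 * P.y ^ 50) P.κ #(I.image (π c)) :=
    sum_nonneg fun I _ => prod_nonneg fun c _ => (Real.exp_pos _).le
  calc _ ≤ _ := subsetProb_exists_good_few_open_le P.p_mem_Icc hz (by positivity) P.F_pos hF
        P.κ_le P.p_mul_F_mul_y_pow_sq_le P.k_add_b_sq_lt
    _ ≤ Real.exp (0.001 * (P.L * P.y ^ 50)) *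
          Real.exp (2.4 * P.L ^ 1 * P.y ^ 1 + 1600 * P.L ^ 1 * P.y ^ 45 + P.y ^ 50) *
            (2 * Real.exp (-(0.015 * (P.L * P.y ^ 50)))) := by
        rw [Fintype.card_fin]
        exact mul_le_mul (mul_le_mul P.one_div_L_inv_pow_le (Real.exp_le_exp.2 <|
          add_le_add (add_le_add P.p_mul_κ_mul_F_le P.codegree_error_le) P.outer_error_le)
            (Real.exp_pos _).le (Real.exp_pos _).le) hπ hsum₀ (by positivity)
    _ = 2 * Real.exp (0.001 * (P.L * P.y ^ 50) +
          (2.4 * P.L ^ 1 * P.y ^ 1 + 1600 * P.L ^ 1 * P.y ^ 45 + P.y ^ 50) +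
            -(0.015 * (P.L * P.y ^ 50))) := by
        rw [← Real.exp_add, mul_left_comm, ← Real.exp_add]
    _ ≤ 2 * Real.exp (-30) := by
        gcongr
        linarith [P.mul_y_pow_le, P.one_le_y_pow 50, P.mul_L_pow_mul_y_pow_le 2.4 1 1 50,
          P.mul_L_pow_mul_y_pow_le 1600 1 45 50]
    _ ≤ 2 * (30 + 1)⁻¹ := by
        gcongr
        exact exp_neg_le_inv_add_one (by norm_num)
    _ < 1 / 5 := by norm_num

theorem exists_graph [Nonempty (Fin n)] (P : Params k n) :
    ∃ G : SimpleGraph (Fin n), G.CliqueFree 3 ∧ Gᶜ.CliqueFree k := by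
  obtain ⟨π, hF, hπ⟩ := P.exists_maps
  have hdegree := P.subsetProb_not_degreeLE_lt hF
  have hcodegree := P.subsetProb_not_codegreeLE_lt
  have hheavy := P.subsetProb_heavySpot_lt π
  have hinner := P.subsetProb_many_innerPairs_lt hF
  have hopen := P.subsetProb_few_open_lt hF hπ
  have hlt := calc
    _ ≤ _ := subsetProb_or P.p_mem_Icc _ _
    _ < 1 / 5 + _ := add_lt_add_of_lt_of_le hdegree <| (subsetProb_or P.p_mem_Icc _ _).trans <|
        add_le_add hcodegree.le <| (subsetProb_or P.p_mem_Icc _ _).trans <|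
          add_le_add hheavy.le <| (subsetProb_or P.p_mem_Icc _ _).trans <|
            add_le_add hinner.le hopen.le
    _ = 1 := by norm_num
  obtain ⟨S, -, hS⟩ := exists_not_of_subsetProb_lt_one hlt
  simp only [not_or] at hS
  obtain ⟨hdegree, hcodegree, hheavy, hinner, hopen⟩ := hS
  have hΔ : 2 * ((10 * k : ℕ) : ℝ) ≤ P.s * P.y ^ 20 := by
    calc 2 * ((10 * k : ℕ) : ℝ) = 20 * P.y ^ 30 * P.y ^ 20 := by
          push_cast
          rw [P.k_eq]
          ring
      _ ≤ P.s * P.y ^ 20 := mul_le_mul_of_nonneg_right P.le_s (pow_pos P.y_pos 20).le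
  refine ⟨twoBite π (baseGraph S), cliqueFree_three_twoBite π _,
    cliqueFree_compl_twoBite hF hΔ P.κ_add.le hheavy hinner ?_⟩
  rintro ⟨I, hI, hfew⟩
  exact hopen ⟨I, hI, not_not.1 hdegree, not_not.1 hcodegree, hfew⟩

end Params

end Parameters

section Main

open Filter

theorem eventually_log_large : ∀ᶠ k : ℕ in atTop, 10 ^ 6 ≤ Real.log k ∧
    Real.log k ^ 10 ≤ Real.exp (Real.log k / 50) ∧
    10 ^ 7 * Real.log (Real.log k) ≤ Real.log k := by
  have hlog : Tendsto (fun k : ℕ => Real.log k) atTop atTop :=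
    Real.tendsto_log_atTop.comp tendsto_natCast_atTop_atTop
  have hpow : ∀ᶠ L : ℝ in atTop, L ^ 10 ≤ Real.exp (L / 50) := by
    filter_upwards [(isLittleO_pow_exp_pos_mul_atTop (k := 10)
      (show (0 : ℝ) < 1 / 50 by norm_num)).bound one_pos] with L hL
    rw [one_mul, Real.norm_eq_abs, Real.norm_eq_abs, Real.abs_exp, one_div_mul_eq_div] at hL
    exact (le_abs_self _).trans hL
  have hloglog : ∀ᶠ L : ℝ in atTop, 10 ^ 7 * Real.log L ≤ L := by
    filter_upwards [Real.isLittleO_log_id_atTop.bound (show (0 : ℝ) < 1 / 10 ^ 7 by norm_num),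
      eventually_ge_atTop 0] with L hL hL₀
    rw [id, Real.norm_eq_abs, Real.norm_eq_abs, abs_of_nonneg hL₀] at hL
    linarith [(le_abs_self _).trans hL]
  exact hlog.eventually ((eventually_ge_atTop _).and (hpow.and hloglog))

theorem ceil_le_two_mul {x : ℝ} (hx : 1 ≤ x) : (⌈x⌉₊ : ℝ) ≤ 2 * x := by
  linarith [Nat.ceil_lt_add_one (zero_le_one.trans hx)]

theorem two_mul_ceil_mul_ceil_le {k : ℕ} {y : ℝ} (hy : 10 ^ 6 ≤ y) (hk : (k : ℝ) = y ^ 50) :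
    2 * (⌈20 * y ^ 30⌉₊ * ⌈y⌉₊) ≤ k := by
  have hy₁ : 1 ≤ y := by linarith
  have hreal : (2 * (⌈20 * y ^ 30⌉₊ * ⌈y⌉₊) : ℝ) ≤ k := by
    calc (2 * (⌈20 * y ^ 30⌉₊ * ⌈y⌉₊) : ℝ) ≤ 2 * (2 * (20 * y ^ 30) * (2 * y)) := by
          gcongr
          exacts [ceil_le_two_mul (by linarith [one_le_pow₀ hy₁ (n := 30)]), ceil_le_two_mul hy₁]
      _ = 160 * y ^ 31 := by ring
      _ ≤ y * y ^ 31 := by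
          gcongr
          linarith
      _ = y ^ 32 := by ring
      _ ≤ y ^ 50 := pow_le_pow_right₀ hy₁ (by norm_num)
      _ = k := hk.symm
  exact_mod_cast hreal

theorem nonempty_params {k n : ℕ} (hL : 10 ^ 6 ≤ Real.log k)
    (hpow : Real.log k ^ 10 ≤ Real.exp (Real.log k / 50))
    (hloglog : 10 ^ 7 * Real.log (Real.log k) ≤ Real.log k)
    (hn : 3 * Real.log k * n ≤ (k : ℝ) ^ 2) : Nonempty (Params k n) := by
  set L := Real.log k with hLk
  set y := Real.exp (L / 50) with hy
  have hk : (0 : ℝ) < k := (Nat.cast_nonneg k).lt_of_ne fun h => by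
    rw [hLk, ← h, Real.log_zero] at hL
    norm_num at hL
  have hyL : 10 ^ 6 ≤ y := hL.trans ((le_self_pow₀ (by linarith) (by norm_num)).trans hpow)
  have hy₁ : 1 ≤ y := by linarith
  have hky : (k : ℝ) = y ^ 50 := by
    rw [← Real.exp_log hk, ← hLk, hy, ← Real.exp_nat_mul]
    congr 1
    push_cast
    ring
  have hs : (⌈20 * y ^ 30⌉₊ : ℝ) ≤ 21 * y ^ 30 := by
    linarith [Nat.ceil_lt_add_one (show 0 ≤ 20 * y ^ 30 by positivity),
      one_le_pow₀ hy₁ (n := 30)]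
  exact ⟨{
    m := ⌈y ^ 99⌉₊
    F := ⌈y⌉₊
    s := ⌈20 * y ^ 30⌉₊
    b := ⌈y ^ 22⌉₊
    κ := k - 2 * (⌈20 * y ^ 30⌉₊ * ⌈y⌉₊)
    L := L
    y := y
    exp_L := Real.exp_log hk
    exp_L_div := rfl
    le_L := hL
    L_pow_le := hpow
    log_L_le := hloglog
    n_le := hn.trans_eq (by rw [hky]; ring)
    le_m := Nat.le_ceil _
    m_le := ceil_le_two_mul (one_le_pow₀ hy₁)
    le_F := Nat.le_ceil _
    F_le := ceil_le_two_mul hy₁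
    le_s := Nat.le_ceil _
    s_le := hs
    le_b := Nat.le_ceil _
    b_le := ceil_le_two_mul (one_le_pow₀ hy₁)
    κ_add := Nat.sub_add_cancel (two_mul_ceil_mul_ceil_le hyL hky) }⟩

end Main

end TwoBite

theorem ramsey_three_k_lower_bound_general :
    ∃ k₀ : ℕ, ∀ k : ℕ, k₀ ≤ k → ∀ n : ℕ, (n : ℝ) ≤ 1 / 3 * (k : ℝ) ^ 2 / Real.log k →
      ∃ G : SimpleGraph (Fin n), G.CliqueFree 3 ∧ Gᶜ.CliqueFree k := by
  obtain ⟨k₀, hk₀⟩ := Filter.eventually_atTop.1 TwoBite.eventually_log_large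
  refine ⟨max k₀ 1, fun k hk n hn => ?_⟩
  obtain ⟨hlog, hpow, hloglog⟩ := hk₀ k (le_of_max_le_left hk)
  rcases n.eq_zero_or_pos with rfl | hn₀
  · have hfree {j : ℕ} (hj : 0 < j) (G : SimpleGraph (Fin 0)) : G.CliqueFree j :=
      SimpleGraph.cliqueFree_of_card_lt (by rwa [Fintype.card_fin])
    exact ⟨⊥, hfree three_pos _, hfree (le_of_max_le_right hk) _⟩
  · have : Nonempty (Fin n) := ⟨⟨0, hn₀⟩⟩
    rw [le_div_iff₀ (by linarith)] at hn
    obtain ⟨P⟩ := TwoBite.nonempty_params (n := n) hlog hpow hloglog (by linarith)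
    exact P.exists_graph

/-- **Lower bound for the off-diagonal Ramsey number `R(3,k)`.**
For every `ε ∈ (0, 1/3)` and all sufficiently large `k`, setting
`n = ⌊(1/3 − ε)·k²/log k⌋`, there is a triangle-free graph on `n` vertices with no
independent set of size `k` (i.e. the complement is `K_k`-free); hence
`R(3,k) > (1/3 − ε)·k²/log k`. -/
theorem ramsey_three_k_lower_bound :
    ∀ ε : ℝ, 0 < ε → ε < 1 / 3 →
      ∃ k₀ : ℕ, ∀ k : ℕ, k₀ ≤ k →
        ∃ G : SimpleGraph (Fin ⌊(1 / 3 - ε) * (k : ℝ) ^ 2 / Real.log k⌋₊),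
          G.CliqueFree 3 ∧ Gᶜ.CliqueFree k := by
  refine fun ε hε₀ hε => ramsey_three_k_lower_bound_general.imp fun k₀ hk₀ k hk => hk₀ k hk _ <|
    (Nat.floor_le (div_nonneg (mul_nonneg (by linarith) (sq_nonneg _))
      (Real.log_natCast_nonneg k))).trans ?_
  gcongr
  linarith
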